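/- arXiv:1311.0363 — 2 statements merged into one kernel-verified Lean document; each statement's English description precedes it below -/
import Mathlib

section
/- Let F be a non-normalizable term whose unique free variable is x, with x ∈ βΩ(F), and let A be a closed term such that F[x:=A] ≄ F[x:=Ω]. Let (F_k) be a cofinal recursive reduction sequence of F and let T be the associated tree. Then T has an infinite branch that is good, i.e. an infinite branch such that for each k the occurrence of x in F_k chosen by the branch is good in F_k. -/
/-! ## A de Bruijn presentation of the untyped λ-calculus -/

/-- Untyped λ-terms in de Bruijn representation. -/
inductive Lam : Type where
  | var : ℕ → Lam
  | app : Lam → Lam → Lam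
  | abs : Lam → Lam
  deriving DecidableEq

namespace Lam

/-- Lifting of de Bruijn indices (cutoff `d`). -/
def lift (d : ℕ) : Lam → Lam
  | var n => if n < d then var n else var (n + 1)
  | app a b => app (lift d a) (lift d b)
  | abs a => abs (lift (d + 1) a)

/-- Capture-avoiding substitution of `u` for the free variable `k`. -/
def subst : Lam → ℕ → Lam → Lam
  | var n, k, u => if n = k then u else if k < n then var (n - 1) else var n
  | app a b, k, u => app (subst a k u) (subst b k u)
  | abs a, k, u => abs (subst a (k + 1) (lift 0 u))

/-- One-step β-reduction `▷`. -/
inductive Step : Lam → Lam → Prop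
  | beta (a b : Lam) : Step (app (abs a) b) (subst a 0 b)
  | appL {a a' : Lam} (b : Lam) : Step a a' → Step (app a b) (app a' b)
  | appR (a : Lam) {b b' : Lam} : Step b b' → Step (app a b) (app a b')
  | abs {a a' : Lam} : Step a a' → Step (Lam.abs a) (Lam.abs a')

/-- β-reduction `▷*` : reflexive and transitive closure of `▷`. -/
def Steps : Lam → Lam → Prop := Relation.ReflTransGen Step

/-- β-normal term. -/
def Normal (t : Lam) : Prop := ∀ t', ¬ Step t t'

/-- `Free x t` : the variable `x` (de Bruijn index, seen from the root) occurs free in `t`. -/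
def Free : ℕ → Lam → Prop
  | x, var n => x = n
  | x, app a b => Free x a ∨ Free x b
  | x, abs a => Free (x + 1) a

/-- Closed term. -/
def Closed (t : Lam) : Prop := ∀ x, ¬ Free x t

/-- A variable applied to a (possibly empty) list of arguments. -/
inductive HeadVarApp : Lam → Prop
  | var (n : ℕ) : HeadVarApp (var n)
  | app {a : Lam} (b : Lam) : HeadVarApp a → HeadVarApp (app a b)

/-- Head normal forms `λx₁…λxₙ.(y t₁ … tₘ)`. -/
inductive IsHNF : Lam → Prop
  | head {t : Lam} : HeadVarApp t → IsHNF t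
  | abs {a : Lam} : IsHNF a → IsHNF (Lam.abs a)

/-- A term is solvable if it β-reduces to a head normal form. -/
def Solvable (t : Lam) : Prop := ∃ h, Steps t h ∧ IsHNF h

/-- `Ω = (λx.(x x))(λx.(x x))`. -/
def Omega : Lam := app (abs (app (var 0) (var 0))) (abs (app (var 0) (var 0)))

/-- Ω-reduction `▷_Ω` : replace an unsolvable subterm by `Ω`. -/
inductive OmegaStep : Lam → Lam → Prop
  | unsolv {t : Lam} : ¬ Solvable t → OmegaStep t Omega
  | appL {a a' : Lam} (b : Lam) : OmegaStep a a' → OmegaStep (app a b) (app a' b)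
  | appR (a : Lam) {b b' : Lam} : OmegaStep b b' → OmegaStep (app a b) (app a b')
  | abs {a a' : Lam} : OmegaStep a a' → OmegaStep (Lam.abs a) (Lam.abs a')

/-- `▷_Ω*`. -/
def OmegaSteps : Lam → Lam → Prop := Relation.ReflTransGen OmegaStep

/-- `▷_{βΩ}` : union of `▷` and `▷_Ω`. -/
def BOStep (t t' : Lam) : Prop := Step t t' ∨ OmegaStep t t'

/-- `▷_{βΩ}*`. -/
def BOSteps : Lam → Lam → Prop := Relation.ReflTransGen BOStep

/-- `u ≃ v` : equality in the λ-theory H (common `▷_{βΩ}*`-reduct). -/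
def SimH (u v : Lam) : Prop := ∃ w, BOSteps u w ∧ BOSteps v w

/-- Simultaneous (parallel) substitution along `σ`. -/
def psubst (σ : ℕ → Lam) : Lam → Lam
  | var n => σ n
  | app a b => app (psubst σ a) (psubst σ b)
  | abs a => abs (psubst (fun n => match n with | 0 => var 0 | m + 1 => lift 0 (σ m)) a)

/-- `(x V)` : the application of a head `h` to a list of arguments. -/
def mkApps (h : Lam) (as : List Lam) : Lam := as.foldl app h

/-- `U ⊑ V` : some initial segment of `V` is obtained from `U` by a substitution
followed by componentwise β-reductions. -/
def Sqsubseteq (U V : List Lam) : Prop :=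
  ∃ (σ : ℕ → Lam) (W : List Lam), W <+: V ∧
    List.Forall₂ (fun u w => Steps (psubst σ u) w) U W

/-! ### Occurrences as positions -/

/-- Directions inside a term. -/
inductive Dir : Type where
  | left | right | down
  deriving DecidableEq

/-- Positions (occurrences) in a term. -/
abbrev Pos := List Dir

/-- The subterm of `t` at position `p` (if any). -/
def subtermAt : Lam → Pos → Option Lam
  | t, [] => some t
  | app a _, Dir.left :: p => subtermAt a p
  | app _ b, Dir.right :: p => subtermAt b p
  | abs a, Dir.down :: p => subtermAt a p
  | _, _ :: _ => none

/-- Replace the subterm of `t` at position `p` by `s` (if the position exists). -/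
def replaceAt : Lam → Pos → Lam → Option Lam
  | _, [], s => some s
  | app a b, Dir.left :: p, s => (replaceAt a p s).map (fun a' => app a' b)
  | app a b, Dir.right :: p, s => (replaceAt b p s).map (fun b' => app a b')
  | abs a, Dir.down :: p, s => (replaceAt a p s).map Lam.abs
  | _, _ :: _, _ => none

/-- `OccOf x t p` : position `p` is an occurrence in `t` of the free variable `x`
(index seen from the root, hence shifted by the number of binders crossed). -/
def OccOf (x : ℕ) (t : Lam) (p : Pos) : Prop :=
  subtermAt t p = some (var (x + p.count Dir.down))

/-- `ArgOf t p V` : `V` is the maximal list of arguments, in `t`, of the occurrence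
sitting at position `p`; i.e. `([] V)` is the applicative context of that occurrence. -/
def ArgOf (t : Lam) (p : Pos) (V : List Lam) : Prop :=
  ∃ (q : Pos) (h : Lam),
    p = q ++ List.replicate V.length Dir.left ∧
    (∀ q' : Pos, q ≠ q' ++ [Dir.left]) ∧
    subtermAt t q = some (mkApps h V) ∧ subtermAt t p = some h

/-- `InArgOfOcc x t p q` : `q` is an occurrence of `x` in `t` and the position `p` lies
inside one of the elements of `Arg(x_[q], t)`. -/
def InArgOfOcc (x : ℕ) (t : Lam) (p q : Pos) : Prop :=
  OccOf x t q ∧ ∃ (r : Pos) (n : ℕ),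
    q = r ++ List.replicate n Dir.left ∧
    (∀ r' : Pos, r ≠ r' ++ [Dir.left]) ∧
    ∃ (j : ℕ) (s : Pos), j < n ∧ p = r ++ List.replicate j Dir.left ++ Dir.right :: s

/-- The occurrence `p` of `x` is pure in `t` : no other occurrence `q` of `x` in `t`
is such that `p` occurs in one of the elements of `Arg(x_[q], t)`. -/
def PureOcc (x : ℕ) (t : Lam) (p : Pos) : Prop :=
  OccOf x t p ∧ ∀ q, q ≠ p → ¬ InArgOfOcc x t p q

/-- Renaming of the free variable `y` into `x`. -/
def rename (y x : ℕ) : Lam → Lam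
  | var n => if n = y then var x else var n
  | app a b => app (rename y x a) (rename y x b)
  | abs a => abs (rename (y + 1) (x + 1) a)

/-- `Residue x u v p p'` : along some β-reduction from `u` to `v`, the occurrence `p'` of
`x` in `v` is a residue (traced copy) of the occurrence `p` of `x` in `u`.  This is
expressed by marking the occurrence `p` of `x` with a fresh variable `y` and tracing the
occurrences of `y`. -/
def Residue (x : ℕ) (u v : Lam) (p p' : Pos) : Prop :=
  ∃ (y : ℕ) (u₀ v₀ : Lam),
    ¬ Free y u ∧
    replaceAt u p (var (y + p.count Dir.down)) = some u₀ ∧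
    Steps u₀ v₀ ∧ rename y x v₀ = v ∧ OccOf y v₀ p'

/-- The occurrence `p` of the free variable `0` ("x") in `G` is good with respect to the
closed term `A` : it is pure in `G` and `u[x:=A]` is solvable for every subterm `u` of
`G` in which this occurrence occurs. -/
def GoodOcc (A G : Lam) (p : Pos) : Prop :=
  PureOcc 0 G p ∧
    ∀ (q : Pos) (u : Lam), q <+: p → subtermAt G q = some u →
      Solvable (subst u (q.count Dir.down) A)

/-! ### Miscellaneous -/

/-- A fixed effective Gödel numbering of λ-terms. -/
def code : Lam → ℕ
  | var n => Nat.pair 0 n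
  | app a b => Nat.pair 1 (Nat.pair (code a) (code b))
  | abs a => Nat.pair 2 (code a)

/-- Body `f^k z` of the Church numeral. -/
def churchBody : ℕ → Lam
  | 0 => var 0
  | k + 1 => app (var 1) (churchBody k)

/-- The Church numeral `c_k = λf λz.(f^k z)`. -/
def church (k : ℕ) : Lam := abs (abs (churchBody k))

/-- `n`-fold abstraction `λx₁…λxₙ.t`. -/
def absN : ℕ → Lam → Lam
  | 0, t => t
  | n + 1, t => abs (absN n t)

/-- Number of symbols of a term. -/
def size : Lam → ℕ
  | var _ => 1
  | app a b => size a + size b + 1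
  | abs a => size a + 1

/-- Subterm relation. -/
inductive Subterm : Lam → Lam → Prop
  | refl (t : Lam) : Subterm t t
  | appL {s a : Lam} (b : Lam) : Subterm s a → Subterm s (app a b)
  | appR (a : Lam) {s b : Lam} : Subterm s b → Subterm s (app a b)
  | abs {s a : Lam} : Subterm s a → Subterm s (Lam.abs a)

/-- `t` contains no subterm of the form `(x u)` for the free variable `x`. -/
def NoVarApp : ℕ → Lam → Prop
  | _, var _ => True
  | x, app a b => a ≠ var x ∧ NoVarApp x a ∧ NoVarApp x b
  | x, abs a => NoVarApp (x + 1) a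

/-- Headed by the variable `d` : term of the form `(x V)` with `x = var d`. -/
inductive Headed : ℕ → Lam → Prop
  | var (d : ℕ) : Headed d (var d)
  | app {d : ℕ} {a : Lam} (b : Lam) : Headed d a → Headed d (app a b)

end Lam

namespace Lam

/-! ### Substitution lemmas -/

theorem lift_lift (t : Lam) : ∀ i j, i ≤ j → lift i (lift j t) = lift (j + 1) (lift i t) := by
  induction t with
  | var n =>
    intro i j h
    simp only [lift]
    split_ifs <;> simp only [lift] <;> split_ifs <;> first | rfl | omega
  | app a b iha ihb => intro i j h; simp [lift, iha i j h, ihb i j h]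
  | abs a ih => intro i j h; simp [lift, ih (i + 1) (j + 1) (by omega)]

theorem lift_subst_ge (t : Lam) : ∀ d k u, k ≤ d →
    lift d (subst t k u) = subst (lift (d + 1) t) k (lift d u) := by
  induction t with
  | var n =>
    intro d k u h
    simp only [lift, subst]
    split_ifs <;> simp only [lift, subst] <;> split_ifs <;>
      first | rfl | omega | (congr 1; omega)
  | app a b iha ihb => intro d k u h; simp [lift, subst, iha d k u h, ihb d k u h]
  | abs a ih =>
    intro d k u h
    simp [lift, subst, ih (d + 1) (k + 1) _ (by omega), lift_lift u 0 d (by omega)]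

theorem lift_subst_le (t : Lam) : ∀ d k u, d ≤ k →
    lift d (subst t k u) = subst (lift d t) (k + 1) (lift d u) := by
  induction t with
  | var n =>
    intro d k u h
    simp only [lift, subst]
    split_ifs <;> simp only [lift, subst] <;> split_ifs <;>
      first | rfl | omega | (congr 1; omega)
  | app a b iha ihb => intro d k u h; simp [lift, subst, iha d k u h, ihb d k u h]
  | abs a ih =>
    intro d k u h
    simp [lift, subst, ih (d + 1) (k + 1) _ (by omega), lift_lift u 0 d (by omega)]

theorem subst_lift (t : Lam) : ∀ k u, subst (lift k t) k u = t := by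
  induction t with
  | var n =>
    intro k u
    simp only [lift]
    split_ifs <;> simp only [subst] <;> split_ifs <;> first | rfl | omega
  | app a b iha ihb => intro k u; simp [lift, subst, iha, ihb]
  | abs a ih => intro k u; simp [lift, subst, ih]

theorem subst_subst (t : Lam) : ∀ j k u v, j ≤ k →
    subst (subst t j u) k v = subst (subst t (k + 1) (lift j v)) j (subst u k v) := by
  induction t with
  | var n =>
    intro j k u v h
    simp only [subst]
    by_cases h1 : n = k + 1
    · subst h1
      rw [if_neg (by omega), if_pos (by omega), if_pos rfl, subst_lift]
      simp [subst]
    · rw [if_neg h1]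
      split_ifs <;> simp only [subst] <;> split_ifs <;>
        first | rfl | omega | (congr 1; omega)
  | app a b iha ihb =>
    intro j k u v h
    simp only [subst]
    rw [iha j k u v h, ihb j k u v h]
  | abs a ih =>
    intro j k u v h
    simp only [subst]
    rw [ih (j + 1) (k + 1) _ _ (by omega), lift_lift v 0 j (by omega),
      lift_subst_le u 0 k v (by omega)]

theorem lift_of_bound (t : Lam) : ∀ d, (∀ y, d ≤ y → ¬ Free y t) → lift d t = t := by
  induction t with
  | var n =>
    intro d h
    have : n < d := by
      by_contra hn
      exact h n (by omega) rfl
    simp [lift, this]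
  | app a b iha ihb =>
    intro d h
    simp [lift, iha d (fun y hy hf => h y hy (Or.inl hf)),
      ihb d (fun y hy hf => h y hy (Or.inr hf))]
  | abs a ih =>
    intro d h
    have := ih (d + 1) (fun y hy hf => by
      obtain ⟨z, rfl⟩ : ∃ z, y = z + 1 := ⟨y - 1, by omega⟩
      exact h z (by omega) hf)
    simp [lift, this]

theorem lift_closed {A : Lam} (hA : Closed A) (d : ℕ) : lift d A = A :=
  lift_of_bound A d (fun y _ => hA y)

theorem lift_Omega (d : ℕ) : lift d Omega = Omega := by
  simp [Omega, lift]

/-! ### Congruences -/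

theorem rtg_lift {r s : Lam → Lam → Prop} (f : Lam → Lam) (hf : ∀ a b, r a b → s (f a) (f b))
    {a b : Lam} (h : Relation.ReflTransGen r a b) : Relation.ReflTransGen s (f a) (f b) := by
  induction h with
  | refl => exact Relation.ReflTransGen.refl
  | tail _ h ih => exact ih.tail (hf _ _ h)


theorem Steps.appL {a a' : Lam} (b : Lam) (h : Steps a a') : Steps (app a b) (app a' b) :=
  rtg_lift (fun a => app a b) (fun _ _ => Step.appL b) h

theorem Steps.abs {a a' : Lam} (h : Steps a a') : Steps (Lam.abs a) (Lam.abs a') :=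
  rtg_lift Lam.abs (fun _ _ => Step.abs) h

theorem Step.subst {t t' : Lam} (h : Step t t') : ∀ k u, Step (t.subst k u) (t'.subst k u) := by
  induction h with
  | beta a b =>
    intro k u
    rw [subst_subst a 0 k b u (by omega)]
    exact Step.beta _ _
  | appL b _ ih => intro k u; exact Step.appL _ (ih k u)
  | appR a _ ih => intro k u; exact Step.appR _ (ih k u)
  | abs _ ih => intro k u; exact Step.abs (ih _ _)

theorem Steps.subst {t t' : Lam} (h : Steps t t') (k : ℕ) (u : Lam) :
    Steps (t.subst k u) (t'.subst k u) :=
  rtg_lift (fun t : Lam => t.subst k u) (fun _ _ h => h.subst k u) h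

/-! ### Weak head reduction and standardization -/

/-- Weak head reduction. -/
inductive Wh : Lam → Lam → Prop
  | beta (a b : Lam) : Wh (app (abs a) b) (subst a 0 b)
  | appL {a a' : Lam} (b : Lam) : Wh a a' → Wh (app a b) (app a' b)

/-- Reflexive transitive closure of weak head reduction. -/
def WhS : Lam → Lam → Prop := Relation.ReflTransGen Wh

theorem Wh.step {a b : Lam} (h : Wh a b) : Step a b := by
  induction h with
  | beta a b => exact Step.beta a b
  | appL b _ ih => exact Step.appL b ih

theorem Wh.det {a b c : Lam} (h : Wh a b) (h' : Wh a c) : b = c := by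
  induction h generalizing c with
  | beta a b =>
    cases h' with
    | beta => rfl
    | appL _ h => cases h
  | appL b h ih =>
    cases h' with
    | beta => cases h
    | appL _ h => rw [ih h]

theorem Wh.subst {t t' : Lam} (h : Wh t t') (k : ℕ) (u : Lam) :
    Wh (t.subst k u) (t'.subst k u) := by
  induction h with
  | beta a b =>
    rw [subst_subst a 0 k b u (by omega)]
    exact Wh.beta _ _
  | appL b _ ih => exact Wh.appL _ ih

theorem Wh.lift {t t' : Lam} (h : Wh t t') (d : ℕ) : Wh (t.lift d) (t'.lift d) := by
  induction h with
  | beta a b =>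
    rw [lift_subst_ge a d 0 b (by omega)]
    exact Wh.beta _ _
  | appL b _ ih => exact Wh.appL _ ih

theorem WhS.appL {a a' : Lam} (b : Lam) (h : WhS a a') : WhS (app a b) (app a' b) :=
  rtg_lift (fun a => app a b) (fun _ _ => Wh.appL b) h

theorem WhS.subst {t t' : Lam} (h : WhS t t') (k : ℕ) (u : Lam) :
    WhS (t.subst k u) (t'.subst k u) :=
  rtg_lift (fun t : Lam => t.subst k u) (fun _ _ h => h.subst k u) h

theorem WhS.lift {t t' : Lam} (h : WhS t t') (d : ℕ) : WhS (t.lift d) (t'.lift d) :=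
  rtg_lift (fun t : Lam => t.lift d) (fun _ _ h => h.lift d) h

/-- Standard reductions. -/
inductive St : Lam → Lam → Prop
  | var {t : Lam} {n : ℕ} : WhS t (var n) → St t (var n)
  | app {t a b a' b' : Lam} : WhS t (app a b) → St a a' → St b b' → St t (app a' b')
  | abs {t a a' : Lam} : WhS t (abs a) → St a a' → St t (abs a')

theorem St.refl (t : Lam) : St t t := by
  induction t with
  | var n => exact St.var Relation.ReflTransGen.refl
  | app a b iha ihb => exact St.app Relation.ReflTransGen.refl iha ihb
  | abs a ih => exact St.abs Relation.ReflTransGen.refl ih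

theorem St.pre {t s r : Lam} (h : WhS t s) (h' : St s r) : St t r := by
  cases h' with
  | var h1 => exact St.var (h.trans h1)
  | app h1 h2 h3 => exact St.app (h.trans h1) h2 h3
  | abs h1 h2 => exact St.abs (h.trans h1) h2

theorem St.lift {t s : Lam} (h : St t s) : ∀ d, St (t.lift d) (s.lift d) := by
  induction h with
  | var h =>
    intro d
    exact St.pre (h.lift d) (St.refl _)
  | app h _ _ ih1 ih2 => intro d; exact St.app (h.lift d) (ih1 d) (ih2 d)
  | abs h _ ih => intro d; exact St.abs (h.lift d) (ih (d + 1))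

theorem St.subst {t s : Lam} (h : St t s) :
    ∀ k u v, St u v → St (t.subst k u) (s.subst k v) := by
  induction h with
  | var h =>
    intro k u v huv
    refine St.pre (h.subst k u) ?_
    simp only [Lam.subst]
    split_ifs
    · exact huv
    · exact St.refl _
    · exact St.refl _
  | app h _ _ ih1 ih2 =>
    intro k u v huv; exact St.app (h.subst k u) (ih1 k u v huv) (ih2 k u v huv)
  | abs h _ ih =>
    intro k u v huv; exact St.abs (h.subst k u) (ih _ _ _ (huv.lift 0))

theorem St.step {m n : Lam} (h : Step m n) : ∀ t, St t m → St t n := by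
  induction h with
  | beta a b =>
    intro t ht
    cases ht with
    | app h1 h2 h3 =>
      cases h2 with
      | abs h4 h5 =>
        refine St.pre ?_ (h5.subst 0 _ _ h3)
        exact (h1.trans (h4.appL _)).trans (Relation.ReflTransGen.single (Wh.beta _ _))
  | appL b _ ih =>
    intro t ht
    cases ht with
    | app h1 h2 h3 => exact St.app h1 (ih _ h2) h3
  | appR a _ ih =>
    intro t ht
    cases ht with
    | app h1 h2 h3 => exact St.app h1 h2 (ih _ h3)
  | abs _ ih =>
    intro t ht
    cases ht with
    | abs h1 h2 => exact St.abs h1 (ih _ h2)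

theorem Steps.st {t s : Lam} (h : Steps t s) : St t s := by
  induction h with
  | refl => exact St.refl _
  | tail _ h ih => exact St.step h _ ih

/-- Head normalization. -/
inductive HN : Lam → Prop
  | head {t : Lam} : HeadVarApp t → HN t
  | abs {a : Lam} : HN a → HN (abs a)
  | wh {t s : Lam} : Wh t s → HN s → HN t

theorem HN.pre {t s : Lam} (h : WhS t s) (hs : HN s) : HN t := by
  induction h using Relation.ReflTransGen.head_induction_on with
  | refl => exact hs
  | head h _ ih => exact HN.wh h ih

theorem St.headVar {t s : Lam} (h : St t s) (hs : HeadVarApp s) :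
    ∃ t', WhS t t' ∧ HeadVarApp t' := by
  induction h with
  | var h => exact ⟨_, h, hs⟩
  | app h _ _ ih1 _ =>
    cases hs with
    | app _ hs =>
      obtain ⟨t', h1, h2⟩ := ih1 hs
      exact ⟨_, h.trans (h1.appL _), h2.app _⟩
  | abs => cases hs

theorem St.hn {s : Lam} (hs : IsHNF s) : ∀ t, St t s → HN t := by
  induction hs with
  | head h =>
    intro t ht
    obtain ⟨t', h1, h2⟩ := ht.headVar h
    exact HN.pre h1 (HN.head h2)
  | abs _ ih =>
    intro t ht
    cases ht with
    | abs h1 h2 => exact HN.pre h1 (HN.abs (ih _ h2))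

theorem solvable_of_steps {t s : Lam} (h : Steps t s) (hs : Solvable s) : Solvable t := by
  obtain ⟨r, h1, h2⟩ := hs
  exact ⟨r, h.trans h1, h2⟩

theorem solvable_abs {t : Lam} (h : Solvable t) : Solvable (abs t) := by
  obtain ⟨r, h1, h2⟩ := h
  exact ⟨_, h1.abs, h2.abs⟩

theorem solvable_iff {t : Lam} : Solvable t ↔ HN t := by
  constructor
  · rintro ⟨h, h1, h2⟩
    exact St.hn h2 _ h1.st
  · intro h
    induction h with
    | head h => exact ⟨_, Relation.ReflTransGen.refl, IsHNF.head h⟩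
    | abs _ ih => exact solvable_abs ih
    | wh h _ ih => exact solvable_of_steps (Relation.ReflTransGen.single h.step) ih

theorem trichotomy (t : Lam) : HeadVarApp t ∨ (∃ a, t = abs a) ∨ ∃ s, Wh t s := by
  induction t with
  | var n => exact Or.inl (HeadVarApp.var n)
  | abs a _ => exact Or.inr (Or.inl ⟨a, rfl⟩)
  | app a b iha _ =>
    rcases iha with h | ⟨a', rfl⟩ | ⟨s, h⟩
    · exact Or.inl (h.app b)
    · exact Or.inr (Or.inr ⟨_, Wh.beta _ _⟩)
    · exact Or.inr (Or.inr ⟨_, h.appL b⟩)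

theorem HN.of_abs {a : Lam} (h : HN (Lam.abs a)) : HN a := by
  cases h with
  | head h => cases h
  | abs h => exact h
  | wh h _ => cases h

theorem HN.of_subst {s : Lam} (h : HN s) : ∀ t k u, s = subst t k u → HN t := by
  induction h with
  | @head s h =>
    intro t k u e
    rcases trichotomy t with h1 | ⟨a, rfl⟩ | ⟨r, h1⟩
    · exact HN.head h1
    · subst e; cases h
    · exfalso
      subst e
      have h2 := h1.subst k u
      clear h1
      generalize t.subst k u = p at h h2
      generalize r.subst k u = q at h2
      induction h2 with
      | beta => cases h with | app _ h => cases h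
      | appL _ _ ih => cases h with | app _ h => exact ih h
  | abs h ih =>
    intro t k u e
    cases t with
    | var n => exact HN.head (HeadVarApp.var n)
    | app a b => simp [Lam.subst] at e
    | abs a =>
      simp only [Lam.subst, Lam.abs.injEq] at e
      exact HN.abs (ih _ _ _ e)
  | wh h _ ih =>
    intro t k u e
    rcases trichotomy t with h1 | ⟨a, rfl⟩ | ⟨r, h1⟩
    · exact HN.head h1
    · subst e; cases h
    · subst e
      exact HN.wh h1 (ih _ _ _ (h.det (h1.subst k u)))

theorem HN.of_lift {s : Lam} (h : HN s) : ∀ t d, s = lift d t → HN t := by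
  intro t d e
  have h2 : HN (Lam.lift d t) := e ▸ h
  clear e h
  generalize hs : Lam.lift d t = s at h2
  induction h2 generalizing t d with
  | @head s h =>
    rcases trichotomy t with h1 | ⟨a, rfl⟩ | ⟨r, h1⟩
    · exact HN.head h1
    · subst hs; cases h
    · exfalso
      subst hs
      have h2 := h1.lift d
      clear h1
      generalize t.lift d = p at h h2
      generalize r.lift d = q at h2
      induction h2 with
      | beta => cases h with | app _ h => cases h
      | appL _ _ ih => cases h with | app _ h => exact ih h
  | abs h ih =>
    cases t with
    | var n => exact HN.head (HeadVarApp.var n)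
    | app a b => simp [Lam.lift] at hs
    | abs a =>
      simp only [Lam.lift, Lam.abs.injEq] at hs
      exact HN.abs (ih _ _ hs)
  | wh h _ ih =>
    rcases trichotomy t with h1 | ⟨a, rfl⟩ | ⟨r, h1⟩
    · exact HN.head h1
    · subst hs; cases h
    · subst hs
      exact HN.wh h1 (ih _ _ ((h1.lift d).det h))

theorem HN.of_app {s : Lam} (h : HN s) : ∀ a b, s = Lam.app a b → HN a := by
  induction h with
  | head h =>
    intro a b e
    subst e
    cases h with
    | app _ h => exact HN.head h
  | abs => intro a b e; cases e
  | wh h hs ih =>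
    intro a b e
    subst e
    cases h with
    | beta a b => exact HN.abs (hs.of_subst _ _ _ rfl)
    | appL _ h => exact HN.wh h (ih _ _ rfl)

theorem not_HN_Omega : ¬ HN Omega := by
  have key : ∀ s, HN s → s ≠ Omega := by
    intro s h
    induction h with
    | head h => rintro rfl; cases h with | app _ h => cases h
    | abs _ _ => intro e; cases e
    | wh h _ ih =>
      rintro rfl
      exact ih (h.det (Wh.beta _ _))
  intro h
  exact key _ h rfl

theorem HeadVarApp.cases_subst {t : Lam} (h : HeadVarApp t) (k : ℕ) :
    (∀ u, HeadVarApp (t.subst k u)) ∨ (∀ u, HN (t.subst k u) → HN u) := by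
  induction h with
  | var n =>
    by_cases hn : n = k
    · right; intro u hu; simpa [Lam.subst, hn] using hu
    · left; intro u; simp only [Lam.subst, if_neg hn]
      split_ifs <;> exact HeadVarApp.var _
  | app b _ ih =>
    rcases ih with h | h
    · left; intro u; exact (h u).app _
    · right; intro u hu; exact h u (hu.of_app _ _ rfl)

theorem HN.generic {A s : Lam} (hA : Closed A) (h : HN s) :
    ∀ t k, s = subst t k Omega → HN (subst t k A) := by
  induction h with
  | @head s h =>
    intro t k e
    rcases trichotomy t with h1 | ⟨a, rfl⟩ | ⟨r, h1⟩
    · rcases h1.cases_subst k with h2 | h2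
      · exact HN.head (h2 A)
      · subst e; exact absurd (h2 _ (HN.head h)) not_HN_Omega
    · subst e; cases h
    · exfalso
      subst e
      have h2 := h1.subst k Omega
      clear h1
      generalize t.subst k Omega = p at h h2
      generalize r.subst k Omega = q at h2
      induction h2 with
      | beta => cases h with | app _ h => cases h
      | appL _ _ ih => cases h with | app _ h => exact ih h
  | abs h ih =>
    intro t k e
    rcases trichotomy t with h1 | ⟨a, rfl⟩ | ⟨r, h1⟩
    · rcases h1.cases_subst k with h2 | h2
      · exact HN.head (h2 A)
      · exact absurd (h2 _ (e ▸ HN.abs h)) not_HN_Omega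
    · simp only [Lam.subst, Lam.abs.injEq, lift_Omega] at e
      simp only [Lam.subst, lift_closed hA]
      exact HN.abs (ih _ _ e)
    · have h2 := h1.subst k Omega
      rw [← e] at h2
      cases h2
  | wh h hs ih =>
    intro t k e
    rcases trichotomy t with h1 | ⟨a, rfl⟩ | ⟨r, h1⟩
    · rcases h1.cases_subst k with h2 | h2
      · exact HN.head (h2 A)
      · exact absurd (h2 _ (e ▸ HN.wh h hs)) not_HN_Omega
    · subst e; cases h
    · subst e
      exact HN.wh (h1.subst k A) (ih _ _ (h.det (h1.subst k Omega)))

theorem solvable_of_subst {t u : Lam} {k : ℕ} (h : Solvable (subst t k u)) : Solvable t :=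
  solvable_iff.2 ((solvable_iff.1 h).of_subst _ _ _ rfl)

theorem solvable_of_lift {t : Lam} {d : ℕ} (h : Solvable (lift d t)) : Solvable t :=
  solvable_iff.2 ((solvable_iff.1 h).of_lift _ _ rfl)

theorem solvable_of_app {a b : Lam} (h : Solvable (app a b)) : Solvable a :=
  solvable_iff.2 ((solvable_iff.1 h).of_app _ _ rfl)

theorem solvable_generic {A t : Lam} {k : ℕ} (hA : Closed A)
    (h : Solvable (subst t k Omega)) : Solvable (subst t k A) :=
  solvable_iff.2 ((solvable_iff.1 h).generic hA _ _ rfl)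

/-! ### Recursive occurrences and good occurrences -/

/-- Recursive version of `OccOf`. -/
def Occ : ℕ → Lam → Pos → Prop
  | x, var n, [] => n = x
  | x, app a _, Dir.left :: p => Occ x a p
  | x, app _ b, Dir.right :: p => Occ x b p
  | x, abs a, Dir.down :: p => Occ (x + 1) a p
  | _, _, _ => False

theorem occ_iff (t : Lam) : ∀ x p, Occ x t p ↔ OccOf x t p := by
  induction t with
  | var n =>
    intro x p
    rcases p with _ | ⟨_ | _ | _, p⟩ <;> simp [Occ, OccOf, subtermAt]
  | app a b iha ihb =>
    intro x p
    rcases p with _ | ⟨_ | _ | _, p⟩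
    · simp [Occ, OccOf, subtermAt]
    · simp only [Occ, iha]; simp [OccOf, subtermAt]
    · simp only [Occ, ihb]; simp [OccOf, subtermAt]
    · simp [Occ, OccOf, subtermAt]
  | abs a ih =>
    intro x p
    rcases p with _ | ⟨_ | _ | _, p⟩
    · simp [Occ, OccOf, subtermAt]
    · simp [Occ, OccOf, subtermAt]
    · simp [Occ, OccOf, subtermAt]
    · simp only [Occ, ih]
      have : x + 1 + List.count Dir.down p = x + (List.count Dir.down p + 1) := by omega
      simp [OccOf, subtermAt, this]

/-- Recursive version of `GoodOcc`. -/
def Good (A : Lam) : ℕ → Lam → Pos → Prop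
  | x, var n, [] => n = x ∧ Solvable (subst (var n) x A)
  | x, app a b, Dir.left :: p => Solvable (subst (app a b) x A) ∧ Good A x a p
  | x, app a b, Dir.right :: p => Solvable (subst (app a b) x A) ∧ ¬ Headed x a ∧ Good A x b p
  | x, abs a, Dir.down :: p => Solvable (subst (abs a) x A) ∧ Good A (x + 1) a p
  | _, _, _ => False

theorem Good.occ {A : Lam} (t : Lam) : ∀ x p, Good A x t p → Occ x t p := by
  induction t with
  | var n =>
    intro x p
    rcases p with _ | ⟨_ | _ | _, p⟩ <;> simp +contextual [Occ, Good]
  | app a b iha ihb =>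
    intro x p h
    rcases p with _ | ⟨_ | _ | _, p⟩ <;> simp only [Good, Occ] at h ⊢
    · exact iha _ _ h.2
    · exact ihb _ _ h.2.2
  | abs a ih =>
    intro x p h
    rcases p with _ | ⟨_ | _ | _, p⟩ <;> simp only [Good, Occ] at h ⊢
    exact ih _ _ h.2

theorem Good.solvable {A t : Lam} {x : ℕ} {p : Pos} (h : Good A x t p) :
    Solvable (subst t x A) := by
  rcases t with n | ⟨a, b⟩ | a <;> rcases p with _ | ⟨_ | _ | _, p⟩ <;> simp only [Good] at h
  · exact h.2
  · exact h.1
  · exact h.1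
  · exact h.1

theorem headed_of_occ (t : Lam) : ∀ x n, Occ x t (List.replicate n Dir.left) → Headed x t := by
  induction t with
  | var m =>
    intro x n h
    cases n with
    | zero =>
      simp only [List.replicate, Occ] at h
      subst h; exact Headed.var _
    | succ n => simp [List.replicate, Occ] at h
  | app a b iha _ =>
    intro x n h
    cases n with
    | zero => simp [Occ] at h
    | succ n => simp only [List.replicate, Occ] at h; exact (iha _ _ h).app _
  | abs a _ =>
    intro x n h
    cases n <;> simp [List.replicate, Occ] at h

theorem Good.no_arg {A : Lam} (t : Lam) : ∀ (r : Pos) x n j s, j < n →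
    Good A x t (r ++ List.replicate j Dir.left ++ Dir.right :: s) →
    Occ x t (r ++ List.replicate n Dir.left) → False := by
  induction t with
  | var m =>
    intro r x n j s _ h _
    rcases r with _ | ⟨_ | _ | _, r⟩ <;> cases j <;> simp [Good, List.replicate] at h
  | app a b iha ihb =>
    intro r x n j s hj h ho
    rcases r with _ | ⟨_ | _ | _, r⟩
    · obtain ⟨n, rfl⟩ : ∃ m, n = m + 1 := ⟨n - 1, by omega⟩
      simp only [List.nil_append, List.replicate, Occ] at ho
      cases j with
      | zero =>
        simp only [List.nil_append, List.replicate, Good] at h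
        exact h.2.1 (headed_of_occ _ _ _ ho)
      | succ j =>
        simp only [List.nil_append, List.replicate, List.cons_append, Good] at h
        exact iha [] x n j s (by omega) (by simpa using h.2) (by simpa using ho)
    · simp only [List.cons_append, Good, Occ] at h ho
      exact iha r x n j s hj h.2 ho
    · simp only [List.cons_append, Good, Occ] at h ho
      exact ihb r x n j s hj h.2.2 ho
    · simp [Good] at h
  | abs a ih =>
    intro r x n j s hj h ho
    rcases r with _ | ⟨_ | _ | _, r⟩
    · cases j <;> simp [Good, List.replicate] at h
    · simp [Good] at h
    · simp [Good] at h
    · simp only [List.cons_append, Good, Occ] at h ho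
      exact ih r _ n j s hj h.2 ho

theorem Good.sub {A : Lam} (t : Lam) : ∀ (q : Pos) x p u, Good A x t p → q <+: p →
    subtermAt t q = some u → Solvable (subst u (x + q.count Dir.down) A) := by
  induction t with
  | var m =>
    intro q x p u h hq hu
    rcases q with _ | ⟨d, q⟩
    · simp only [subtermAt, Option.some.injEq] at hu
      subst hu; simpa using h.solvable
    · simp [subtermAt] at hu
  | app a b iha ihb =>
    intro q x p u h hq hu
    rcases q with _ | ⟨d, q⟩
    · simp only [subtermAt, Option.some.injEq] at hu
      subst hu; simpa using h.solvable
    · rcases p with _ | ⟨d', p⟩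
      · simp at hq
      · rw [List.cons_prefix_cons] at hq
        obtain ⟨rfl, hq⟩ := hq
        cases d <;> simp only [subtermAt, Good] at hu h
        · simpa using iha q x p u h.2 hq hu
        · simpa using ihb q x p u h.2.2 hq hu
  | abs a ih =>
    intro q x p u h hq hu
    rcases q with _ | ⟨d, q⟩
    · simp only [subtermAt, Option.some.injEq] at hu
      subst hu; simpa using h.solvable
    · rcases p with _ | ⟨d', p⟩
      · simp at hq
      · rw [List.cons_prefix_cons] at hq
        obtain ⟨rfl, hq⟩ := hq
        cases d <;> simp only [subtermAt, Good] at hu h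
        have := ih q (x + 1) p u h.2 hq hu
        rw [show x + List.count Dir.down (Dir.down :: q) = x + 1 + List.count Dir.down q by
          simp; omega]
        exact this

theorem Good.goodOcc {A G : Lam} {p : Pos} (h : Good A 0 G p) : GoodOcc A G p := by
  refine ⟨⟨(occ_iff _ _ _).1 (h.occ _ _ _), ?_⟩, ?_⟩
  · rintro q _ ⟨hq, r, n, rfl, _, j, s, hj, rfl⟩
    exact Good.no_arg G r 0 n j s hj h ((occ_iff _ _ _).2 hq)
  · intro q u hq hu
    simpa using Good.sub G q 0 p u h hq hu

theorem Good.finite (A t : Lam) : ∀ x, {p | Good A x t p}.Finite := by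
  induction t with
  | var n =>
    intro x
    refine (Set.finite_singleton ([] : Pos)).subset ?_
    intro p h
    rcases p with _ | ⟨_ | _ | _, p⟩ <;> simp [Good] at h ⊢
  | app a b iha ihb =>
    intro x
    refine (((iha x).image (List.cons Dir.left)).union
      ((ihb x).image (List.cons Dir.right))).subset ?_
    intro p h
    rcases p with _ | ⟨_ | _ | _, p⟩ <;> simp only [Set.mem_ofPred_eq, Good] at h
    · exact Or.inl ⟨p, h.2, rfl⟩
    · exact Or.inr ⟨p, h.2.2, rfl⟩
  | abs a ih =>
    intro x
    refine ((ih (x + 1)).image (List.cons Dir.down)).subset ?_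
    intro p h
    rcases p with _ | ⟨_ | _ | _, p⟩ <;> simp only [Set.mem_ofPred_eq, Good] at h
    exact ⟨p, h.2, rfl⟩

/-! ### Existence of good occurrences -/

theorem OmegaSteps.app {a a' b b' : Lam} (ha : OmegaSteps a a') (hb : OmegaSteps b b') :
    OmegaSteps (app a b) (app a' b') :=
  Relation.ReflTransGen.trans
    (rtg_lift (fun a => Lam.app a b) (fun _ _ => OmegaStep.appL b) ha)
    (rtg_lift (fun b => Lam.app a' b) (fun _ _ => OmegaStep.appR a') hb)

theorem OmegaSteps.abs {a a' : Lam} (ha : OmegaSteps a a') :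
    OmegaSteps (Lam.abs a) (Lam.abs a') :=
  rtg_lift Lam.abs (fun _ _ => OmegaStep.abs) ha

theorem good_of_headed {A t : Lam} {x : ℕ} (h : Headed x t) (hs : Solvable (subst t x A)) :
    ∃ p, Good A x t p := by
  induction h with
  | var => exact ⟨[], rfl, hs⟩
  | app b _ ih =>
    obtain ⟨p, hp⟩ := ih (solvable_of_app hs)
    exact ⟨Dir.left :: p, hs, hp⟩

theorem common_of_no_good {A : Lam} (hA : Closed A) (t : Lam) : ∀ x, (∀ p, ¬ Good A x t p) →
    ∃ w, OmegaSteps (subst t x A) w ∧ OmegaSteps (subst t x Omega) w := by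
  have unsolv : ∀ t x, ¬ Solvable (subst t x A) →
      ∃ w, OmegaSteps (subst t x A) w ∧ OmegaSteps (subst t x Omega) w := fun t x h =>
    ⟨Omega, Relation.ReflTransGen.single (OmegaStep.unsolv h),
      Relation.ReflTransGen.single (OmegaStep.unsolv (fun h' => h (solvable_generic hA h')))⟩
  induction t with
  | var n =>
    intro x h
    by_cases hs : Solvable (subst (var n) x A)
    · have hn : n ≠ x := fun e => h [] ⟨e, hs⟩
      simp only [subst, if_neg hn]
      exact ⟨_, Relation.ReflTransGen.refl, Relation.ReflTransGen.refl⟩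
    · exact unsolv _ _ hs
  | app a b iha ihb =>
    intro x h
    by_cases hs : Solvable (subst (app a b) x A)
    · have hh : ¬ Headed x a := fun hh => by
        obtain ⟨p, hp⟩ := good_of_headed (hh.app b) hs
        exact h p hp
      obtain ⟨w1, h1, h2⟩ := iha x (fun p hp => h (Dir.left :: p) ⟨hs, hp⟩)
      obtain ⟨w2, h3, h4⟩ := ihb x (fun p hp => h (Dir.right :: p) ⟨hs, hh, hp⟩)
      exact ⟨_, h1.app h3, h2.app h4⟩
    · exact unsolv _ _ hs
  | abs a ih =>
    intro x h
    by_cases hs : Solvable (subst (abs a) x A)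
    · obtain ⟨w, h1, h2⟩ := ih (x + 1) (fun p hp => h (Dir.down :: p) ⟨hs, hp⟩)
      refine ⟨abs w, ?_, ?_⟩
      · simp only [subst, lift_closed hA]; exact h1.abs
      · simp only [subst, lift_Omega]; exact h2.abs
    · exact unsolv _ _ hs

/-! ### Tracing good occurrences backwards -/

theorem Headed.step {x : ℕ} {t t' : Lam} (h : Headed x t) (hs : Step t t') : Headed x t' := by
  induction h generalizing t' with
  | var => cases hs
  | app b h ih =>
    cases hs with
    | beta => cases h
    | appL _ hs => exact (ih hs).app _
    | appR _ hs => exact h.app _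

theorem Headed.lift {x : ℕ} {t : Lam} (h : Headed x t) (d : ℕ) (hd : d ≤ x) :
    Headed (x + 1) (t.lift d) := by
  induction h with
  | var => simp only [Lam.lift, if_neg (show ¬ x < d by omega)]; exact Headed.var _
  | app b _ ih => exact ih.app _

theorem Headed.subst {x : ℕ} {t : Lam} (h : Headed (x + 1) t) (k : ℕ) (u : Lam) (hk : k ≤ x) :
    Headed x (t.subst k u) := by
  generalize hy : x + 1 = y at h
  induction h with
  | var =>
    subst hy
    simp only [Lam.subst, if_neg (show ¬ x + 1 = k by omega), if_pos (show k < x + 1 by omega)]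
    exact Headed.var _
  | app b _ ih => exact ih.app _

theorem Good.of_lift {A : Lam} (hA : Closed A) (t : Lam) : ∀ d x p, d ≤ x →
    Good A (x + 1) (lift d t) p → Good A x t p := by
  have solv : ∀ t d x, d ≤ x → Solvable (subst (lift d t) (x + 1) A) →
      Solvable (subst t x A) := by
    intro t d x hd h
    have e := lift_subst_le t d x A hd
    rw [lift_closed hA] at e
    rw [← e] at h
    exact solvable_of_lift h
  induction t with
  | var n =>
    intro d x p hd h
    have hs := solv _ _ _ hd h.solvable
    have ho := h.occ
    rcases p with _ | ⟨d', p⟩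
    · refine ⟨?_, hs⟩
      simp only [lift] at ho
      split_ifs at ho <;> simp only [Occ] at ho <;> omega
    · simp only [lift] at ho
      split_ifs at ho <;> simp [Occ] at ho
  | app a b iha ihb =>
    intro d x p hd h
    have hs := solv _ _ _ hd h.solvable
    rcases p with _ | ⟨_ | _ | _, p⟩ <;> simp only [lift, Good] at h
    · exact ⟨hs, iha d x p hd h.2⟩
    · exact ⟨hs, fun hh => h.2.1 (hh.lift d hd), ihb d x p hd h.2.2⟩
  | abs a ih =>
    intro d x p hd h
    have hs := solv _ _ _ hd h.solvable
    rcases p with _ | ⟨_ | _ | _, p⟩ <;> simp only [lift, Good] at h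
    exact ⟨hs, ih (d + 1) (x + 1) p (by omega) h.2⟩

theorem Occ.lift (t : Lam) : ∀ d x p, d ≤ x → Occ x t p → Occ (x + 1) (t.lift d) p := by
  induction t with
  | var n =>
    intro d x p hd h
    rcases p with _ | ⟨d', p⟩
    · simp only [Occ] at h
      subst h
      simp [Lam.lift, if_neg (show ¬ n < d by omega), Occ]
    · simp [Occ] at h
  | app a b iha ihb =>
    intro d x p hd h
    rcases p with _ | ⟨_ | _ | _, p⟩ <;> simp only [Lam.lift, Occ] at h ⊢
    · exact iha d x p hd h
    · exact ihb d x p hd h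
  | abs a ih =>
    intro d x p hd h
    rcases p with _ | ⟨_ | _ | _, p⟩ <;> simp only [Lam.lift, Occ] at h ⊢
    exact ih _ _ p (by omega) h

theorem Occ.subst (t : Lam) : ∀ k x p u, k ≤ x → Occ (x + 1) t p → Occ x (t.subst k u) p := by
  induction t with
  | var n =>
    intro k x p u hk h
    rcases p with _ | ⟨d', p⟩
    · simp only [Occ] at h
      subst h
      simp only [Lam.subst, if_neg (show ¬ x + 1 = k by omega),
        if_pos (show k < x + 1 by omega), Occ]
      omega
    · simp [Occ] at h
  | app a b iha ihb =>
    intro k x p u hk h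
    rcases p with _ | ⟨_ | _ | _, p⟩ <;> simp only [Lam.subst, Occ] at h ⊢
    · exact iha k x p u hk h
    · exact ihb k x p u hk h
  | abs a ih =>
    intro k x p u hk h
    rcases p with _ | ⟨_ | _ | _, p⟩ <;> simp only [Lam.subst, Occ] at h ⊢
    exact ih _ _ p _ (by omega) h

theorem rename_lift (t : Lam) : ∀ k y x, k ≤ x → k ≤ y →
    rename (y + 1) (x + 1) (lift k t) = lift k (rename y x t) := by
  induction t with
  | var n =>
    intro k y x hx hy
    simp only [lift, rename]
    split_ifs <;> simp only [lift, rename] <;> split_ifs <;> first | rfl | omega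
  | app a b iha ihb => intro k y x hx hy; simp [lift, rename, iha k y x hx hy, ihb k y x hx hy]
  | abs a ih =>
    intro k y x hx hy
    simp [lift, rename, ih (k + 1) (y + 1) (x + 1) (by omega) (by omega)]

theorem rename_subst (t : Lam) : ∀ k y x u, k ≤ x → k ≤ y →
    rename y x (subst t k u) = subst (rename (y + 1) (x + 1) t) k (rename y x u) := by
  induction t with
  | var n =>
    intro k y x u hx hy
    simp only [subst, rename]
    split_ifs <;> simp only [subst, rename] <;> split_ifs <;>
      first | rfl | omega | (congr 1; omega)
  | app a b iha ihb =>
    intro k y x u hx hy; simp [subst, rename, iha k y x u hx hy, ihb k y x u hx hy]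
  | abs a ih =>
    intro k y x u hx hy
    simp [subst, rename, ih (k + 1) (y + 1) (x + 1) _ (by omega : k + 1 ≤ x + 1)
      (by omega : k + 1 ≤ y + 1), rename_lift u 0 y x]

theorem rename_eq_app {y x : ℕ} {w a b : Lam} (h : rename y x w = app a b) :
    ∃ a' b', w = app a' b' ∧ rename y x a' = a ∧ rename y x b' = b := by
  cases w with
  | var n => simp only [rename] at h; split_ifs at h
  | app a' b' =>
    simp only [rename, app.injEq] at h
    exact ⟨a', b', rfl, h.1, h.2⟩
  | abs a' => simp [rename] at h

theorem rename_eq_abs {y x : ℕ} {w a : Lam} (h : rename y x w = abs a) :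
    ∃ a', w = abs a' ∧ rename (y + 1) (x + 1) a' = a := by
  cases w with
  | var n => simp only [rename] at h; split_ifs at h
  | app a' b' => simp [rename] at h
  | abs a' =>
    simp only [rename, abs.injEq] at h
    exact ⟨a', rfl, h⟩

theorem Step.unrename {u v : Lam} (h : Step u v) : ∀ y x w, rename y x w = u →
    ∃ v', Step w v' ∧ rename y x v' = v := by
  induction h with
  | beta a b =>
    intro y x w hw
    obtain ⟨c, b', rfl, h1, h2⟩ := rename_eq_app hw
    obtain ⟨a', rfl, h3⟩ := rename_eq_abs h1
    refine ⟨_, Step.beta _ _, ?_⟩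
    rw [rename_subst _ _ _ _ _ (by omega) (by omega), h2, h3]
  | appL b _ ih =>
    intro y x w hw
    obtain ⟨a', b', rfl, h1, h2⟩ := rename_eq_app hw
    obtain ⟨v', h3, h4⟩ := ih y x a' h1
    exact ⟨_, h3.appL _, by simp [rename, h4, h2]⟩
  | appR a _ ih =>
    intro y x w hw
    obtain ⟨a', b', rfl, h1, h2⟩ := rename_eq_app hw
    obtain ⟨v', h3, h4⟩ := ih y x b' h2
    exact ⟨_, h3.appR _, by simp [rename, h4, h1]⟩
  | abs _ ih =>
    intro y x w hw
    obtain ⟨a', rfl, h1⟩ := rename_eq_abs hw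
    obtain ⟨v', h3, h4⟩ := ih _ _ a' h1
    exact ⟨_, h3.abs, by simp [rename, h4]⟩

theorem Good.of_subst {A : Lam} (hA : Closed A) (t : Lam) : ∀ k x y b p, k ≤ x → k ≤ y →
    Good A x (subst t k b) p →
    Good A (x + 1) t p ∨ ∃ q, Good A x b q ∧
      ∀ wt wb, rename (y + 1) (x + 1) wt = t → Occ y wb q → Occ y (subst wt k wb) p := by
  have solv : ∀ t k x b, k ≤ x → Solvable (subst (subst t k b) x A) →
      Solvable (subst t (x + 1) A) := by
    intro t k x b hk h
    rw [subst_subst t k x b A hk, lift_closed hA] at h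
    exact solvable_of_subst h
  induction t with
  | var n =>
    intro k x y b p hx hy h
    have hs := solv _ _ _ _ hx h.solvable
    by_cases hn : n = k
    · right
      subst hn
      refine ⟨p, by simpa [subst] using h, ?_⟩
      intro wt wb hwt hwb
      have : wt = var n := by
        cases wt with
        | var m =>
          simp only [rename] at hwt
          split_ifs at hwt with hm
          · simp only [var.injEq] at hwt; omega
          · exact hwt
        | app a b => simp [rename] at hwt
        | abs a => simp [rename] at hwt
      subst this
      simpa [subst] using hwb
    · left
      have ho := h.occ
      simp only [subst, if_neg hn] at ho
      rcases p with _ | ⟨d', p⟩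
      · refine ⟨?_, hs⟩
        split_ifs at ho <;> simp only [Occ] at ho <;> omega
      · split_ifs at ho <;> simp [Occ] at ho
  | app a c iha ihc =>
    intro k x y b p hx hy h
    have hs := solv _ _ _ _ hx h.solvable
    rcases p with _ | ⟨_ | _ | _, p⟩ <;> simp only [subst, Good] at h
    · rcases iha k x y b p hx hy h.2 with h1 | ⟨q, h1, h2⟩
      · exact Or.inl ⟨hs, h1⟩
      · refine Or.inr ⟨q, h1, ?_⟩
        intro wt wb hwt hwb
        obtain ⟨a', c', rfl, h3, h4⟩ := rename_eq_app hwt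
        exact h2 _ _ h3 hwb
    · rcases ihc k x y b p hx hy h.2.2 with h1 | ⟨q, h1, h2⟩
      · exact Or.inl ⟨hs, fun hh => h.2.1 (hh.subst k b hx), h1⟩
      · refine Or.inr ⟨q, h1, ?_⟩
        intro wt wb hwt hwb
        obtain ⟨a', c', rfl, h3, h4⟩ := rename_eq_app hwt
        exact h2 _ _ h4 hwb
  | abs a ih =>
    intro k x y b p hx hy h
    have hs := solv _ _ _ _ hx h.solvable
    rcases p with _ | ⟨_ | _ | _, p⟩ <;> simp only [subst, Good] at h
    rcases ih (k + 1) (x + 1) (y + 1) _ p (by omega) (by omega) h.2 with h1 | ⟨q, h1, h2⟩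
    · exact Or.inl ⟨hs, h1⟩
    · refine Or.inr ⟨q, Good.of_lift hA b 0 x q (by omega) h1, ?_⟩
      intro wt wb hwt hwb
      obtain ⟨a', rfl, h3⟩ := rename_eq_abs hwt
      exact h2 _ _ h3 (Occ.lift wb 0 y q (by omega) hwb)

theorem Good.trace_step {A : Lam} (hA : Closed A) {u v : Lam} (h : Step u v) :
    ∀ y x p', Good A x v p' → ∃ p, Good A x u p ∧
      ∀ w, rename y x w = u → Occ y w p →
        ∃ v', Step w v' ∧ rename y x v' = v ∧ Occ y v' p' := by
  have solv : ∀ {u v : Lam} {x}, Step u v → Solvable (subst v x A) → Solvable (subst u x A) :=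
    fun h hs => solvable_of_steps (Relation.ReflTransGen.single (h.subst _ _)) hs
  induction h with
  | beta a b =>
    intro y x p' hp
    have hs := solv (Step.beta a b) hp.solvable
    rcases Good.of_subst hA a 0 x y b p' (by omega) (by omega) hp with h1 | ⟨q, h1, h2⟩
    · refine ⟨Dir.left :: Dir.down :: p', ⟨hs, ?_, h1⟩, ?_⟩
      · simp only [subst, lift_closed hA]
        exact solvable_abs h1.solvable
      · intro w hw ho
        obtain ⟨c, b', rfl, h3, h4⟩ := rename_eq_app hw
        obtain ⟨a', rfl, h5⟩ := rename_eq_abs h3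
        refine ⟨_, Step.beta _ _, ?_, ?_⟩
        · rw [rename_subst _ _ _ _ _ (by omega) (by omega), h4, h5]
        · exact Occ.subst a' 0 y p' b' (by omega) ho
    · refine ⟨Dir.right :: q, ⟨hs, (fun hh => by cases hh), h1⟩, ?_⟩
      intro w hw ho
      obtain ⟨c, b', rfl, h3, h4⟩ := rename_eq_app hw
      obtain ⟨a', rfl, h5⟩ := rename_eq_abs h3
      refine ⟨_, Step.beta _ _, ?_, ?_⟩
      · rw [rename_subst _ _ _ _ _ (by omega) (by omega), h4, h5]
      · exact h2 _ _ h5 ho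
  | @appL a a' b h ih =>
    intro y x p' hp
    have hs := solv (Step.appL b h) hp.solvable
    rcases p' with _ | ⟨_ | _ | _, p'⟩ <;> simp only [Good] at hp
    · obtain ⟨p, h1, h2⟩ := ih y x p' hp.2
      refine ⟨Dir.left :: p, ⟨hs, h1⟩, ?_⟩
      intro w hw ho
      obtain ⟨wa, wb, rfl, h3, h4⟩ := rename_eq_app hw
      obtain ⟨v', h5, h6, h7⟩ := h2 wa h3 ho
      exact ⟨app v' wb, h5.appL _, by simp [rename, h6, h4], h7⟩
    · refine ⟨Dir.right :: p', ⟨hs, fun hh => hp.2.1 (hh.step h), hp.2.2⟩, ?_⟩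
      intro w hw ho
      obtain ⟨wa, wb, rfl, h3, h4⟩ := rename_eq_app hw
      obtain ⟨v', h5, h6⟩ := h.unrename y x wa h3
      exact ⟨app v' wb, h5.appL _, by simp [rename, h6, h4], ho⟩
  | @appR a b b' h ih =>
    intro y x p' hp
    have hs := solv (Step.appR a h) hp.solvable
    rcases p' with _ | ⟨_ | _ | _, p'⟩ <;> simp only [Good] at hp
    · refine ⟨Dir.left :: p', ⟨hs, hp.2⟩, ?_⟩
      intro w hw ho
      obtain ⟨wa, wb, rfl, h3, h4⟩ := rename_eq_app hw
      obtain ⟨v', h5, h6⟩ := h.unrename y x wb h4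
      exact ⟨app wa v', h5.appR _, by simp [rename, h6, h3], ho⟩
    · obtain ⟨p, h1, h2⟩ := ih y x p' hp.2.2
      refine ⟨Dir.right :: p, ⟨hs, hp.2.1, h1⟩, ?_⟩
      intro w hw ho
      obtain ⟨wa, wb, rfl, h3, h4⟩ := rename_eq_app hw
      obtain ⟨v', h5, h6, h7⟩ := h2 wb h4 ho
      exact ⟨app wa v', h5.appR _, by simp [rename, h6, h3], h7⟩
  | @abs a a' h ih =>
    intro y x p' hp
    have hs := solv (Step.abs h) hp.solvable
    rcases p' with _ | ⟨_ | _ | _, p'⟩ <;> simp only [Good] at hp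
    obtain ⟨p, h1, h2⟩ := ih (y + 1) (x + 1) p' hp.2
    refine ⟨Dir.down :: p, ⟨hs, h1⟩, ?_⟩
    intro w hw ho
    obtain ⟨wa, rfl, h3⟩ := rename_eq_abs hw
    obtain ⟨v', h5, h6, h7⟩ := h2 wa h3 ho
    exact ⟨abs v', h5.abs, by simp [rename, h6], h7⟩

theorem Good.trace {A : Lam} (hA : Closed A) {u v : Lam} (h : Steps u v) (y x : ℕ) :
    ∀ p', Good A x v p' → ∃ p, Good A x u p ∧
      ∀ w, rename y x w = u → Occ y w p →
        ∃ v', Steps w v' ∧ rename y x v' = v ∧ Occ y v' p' := by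
  induction h with
  | refl => exact fun p' hp => ⟨p', hp, fun w hw ho => ⟨w, Relation.ReflTransGen.refl, hw, ho⟩⟩
  | tail _ hs ih =>
    intro p' hp
    obtain ⟨p1, h1, h2⟩ := Good.trace_step hA hs y x p' hp
    obtain ⟨p, h3, h4⟩ := ih p1 h1
    refine ⟨p, h3, ?_⟩
    intro w hw ho
    obtain ⟨v1, h5, h6, h7⟩ := h4 w hw ho
    obtain ⟨v2, h8, h9, h10⟩ := h2 v1 h6 h7
    exact ⟨v2, h5.tail h8, h9, h10⟩

theorem exists_fresh (t : Lam) : ∃ N, ∀ y, N ≤ y → ¬ Free y t := by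
  induction t with
  | var n => exact ⟨n + 1, fun y hy h => by simp only [Free] at h; omega⟩
  | app a b iha ihb =>
    obtain ⟨N, hN⟩ := iha
    obtain ⟨M, hM⟩ := ihb
    refine ⟨N + M, fun y hy h => ?_⟩
    rcases h with h | h
    · exact hN y (by omega) h
    · exact hM y (by omega) h
  | abs a ih =>
    obtain ⟨N, hN⟩ := ih
    exact ⟨N, fun y hy h => hN (y + 1) (by omega) h⟩

theorem rename_fresh (t : Lam) : ∀ y x, ¬ Free y t → rename y x t = t := by
  induction t with
  | var n =>
    intro y x h
    have : n ≠ y := fun e => h e.symm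
    simp [rename, this]
  | app a b iha ihb =>
    intro y x h
    simp [rename, iha y x (fun hf => h (Or.inl hf)), ihb y x (fun hf => h (Or.inr hf))]
  | abs a ih =>
    intro y x h
    simp [rename, ih (y + 1) (x + 1) h]

theorem exists_mark (t : Lam) : ∀ y x p, ¬ Free y t → Occ x t p →
    ∃ w, replaceAt t p (var (y + p.count Dir.down)) = some w ∧ rename y x w = t ∧ Occ y w p := by
  induction t with
  | var n =>
    intro y x p hy h
    rcases p with _ | ⟨d, p⟩
    · simp only [Occ] at h
      subst h
      exact ⟨var y, by simp [replaceAt], by simp [rename], rfl⟩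
    · simp [Occ] at h
  | app a b iha ihb =>
    intro y x p hy h
    have hya : ¬ Free y a := fun hf => hy (Or.inl hf)
    have hyb : ¬ Free y b := fun hf => hy (Or.inr hf)
    rcases p with _ | ⟨_ | _ | _, p⟩ <;> simp only [Occ] at h
    · obtain ⟨w, h1, h2, h3⟩ := iha y x p hya h
      exact ⟨app w b, by simp [replaceAt, h1], by simp [rename, h2, rename_fresh b y x hyb], h3⟩
    · obtain ⟨w, h1, h2, h3⟩ := ihb y x p hyb h
      exact ⟨app a w, by simp [replaceAt, h1], by simp [rename, h2, rename_fresh a y x hya], h3⟩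
  | abs a ih =>
    intro y x p hy h
    rcases p with _ | ⟨_ | _ | _, p⟩ <;> simp only [Occ] at h
    obtain ⟨w, h1, h2, h3⟩ := ih (y + 1) (x + 1) p hy h
    refine ⟨abs w, ?_, by simp [rename, h2], h3⟩
    have e : y + List.count Dir.down (Dir.down :: p) = y + 1 + List.count Dir.down p := by
      simp; omega
    rw [e]
    simp [replaceAt, h1]

theorem Good.residue {A : Lam} (hA : Closed A) {u v : Lam} (h : Steps u v) {p' : Pos}
    (hp : Good A 0 v p') : ∃ p, Good A 0 u p ∧ Residue 0 u v p p' := by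
  obtain ⟨y, hy⟩ := exists_fresh u
  obtain ⟨p, h1, h2⟩ := Good.trace hA h y 0 p' hp
  obtain ⟨w, h3, h4, h5⟩ := exists_mark u y 0 p (hy y le_rfl) (h1.occ _ _ _)
  obtain ⟨v', h6, h7, h8⟩ := h2 w h4 h5
  exact ⟨p, h1, y, w, v', hy y le_rfl, h3, h6, h7, (occ_iff _ _ _).1 h8⟩

/-! ### König's lemma -/

/-- `a` at level `k` has a descendant `m` levels further. -/
def Deep {α : Type} (G : ℕ → α → Prop) (R : ℕ → α → α → Prop) : ℕ → ℕ → α → Prop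
  | 0, k, a => G k a
  | m + 1, k, a => G k a ∧ ∃ b, R k a b ∧ Deep G R m (k + 1) b

theorem konig {α : Type} (G : ℕ → α → Prop) (R : ℕ → α → α → Prop)
    (hfin : ∀ k, {a | G k a}.Finite) (hne : ∀ k, ∃ a, G k a)
    (hpar : ∀ k b, G (k + 1) b → ∃ a, G k a ∧ R k a b) :
    ∃ p : ℕ → α, ∀ k, G k (p k) ∧ R k (p k) (p (k + 1)) := by
  have hG : ∀ m k a, Deep G R m k a → G k a := by
    intro m k a h
    cases m with
    | zero => exact h
    | succ m => exact h.1
  have hsucc : ∀ m k a, Deep G R (m + 1) k a → Deep G R m k a := by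
    intro m
    induction m with
    | zero => intro k a h; exact h.1
    | succ m ih =>
      rintro k a ⟨h1, b, h2, h3⟩
      exact ⟨h1, b, h2, ih _ _ h3⟩
  have hanti : ∀ m n k a, m ≤ n → Deep G R n k a → Deep G R m k a := by
    intro m n k a hmn
    induction hmn with
    | refl => exact id
    | step _ ih => exact fun h => ih (hsucc _ _ _ h)
  have hex : ∀ m k, ∃ a, Deep G R m k a := by
    intro m
    induction m with
    | zero => exact hne
    | succ m ih =>
      intro k
      obtain ⟨b, hb⟩ := ih (k + 1)
      obtain ⟨a, ha, hr⟩ := hpar k b (hG _ _ _ hb)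
      exact ⟨a, ha, b, hr, hb⟩
  have pigeon : ∀ k (P : α → Prop), (∀ m, ∃ a, P a ∧ Deep G R m k a) →
      ∃ a, P a ∧ ∀ m, Deep G R m k a := by
    intro k P h
    by_contra hcon
    push Not at hcon
    choose! f hf using hcon
    obtain ⟨N, hN⟩ := ((hfin k).image f).bddAbove
    obtain ⟨a, ha, hd⟩ := h N
    exact hf a ha (hanti _ _ _ _ (hN ⟨a, hG _ _ _ hd, rfl⟩) hd)
  obtain ⟨a0, -, ha0⟩ := pigeon 0 (fun _ => True)
    (fun m => (hex m 0).imp fun a h => ⟨trivial, h⟩)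
  have next : ∀ k a, (∀ m, Deep G R m k a) → ∃ b, R k a b ∧ ∀ m, Deep G R m (k + 1) b :=
    fun k a h => pigeon (k + 1) (R k a) (fun m => (h (m + 1)).2)
  choose! f hf1 hf2 using next
  let p : ℕ → α := fun k => Nat.rec a0 (fun k a => f k a) k
  have hp : ∀ k m, Deep G R m k (p k) := by
    intro k
    induction k with
    | zero => exact ha0
    | succ k ih => exact hf2 k (p k) ih
  exact ⟨p, fun k => ⟨hp k 0, hf1 k (p k) (hp k)⟩⟩

theorem exists_good {F A G : Lam} (hA : Closed A)
    (hne : ¬ SimH (subst F 0 A) (subst F 0 Omega)) (h : Steps F G) : ∃ p, Good A 0 G p := by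
  by_contra hcon
  push Not at hcon
  obtain ⟨w, h1, h2⟩ := common_of_no_good hA G 0 hcon
  have hb : ∀ {s t}, Steps s t → BOSteps s t := fun h =>
    rtg_lift id (fun _ _ => Or.inl) h
  have ho : ∀ {s t}, OmegaSteps s t → BOSteps s t := fun h =>
    rtg_lift id (fun _ _ => Or.inr) h
  exact hne ⟨w, (hb (h.subst 0 A)).trans (ho h1), (hb (h.subst 0 Omega)).trans (ho h2)⟩

end Lam

open Lam in
/-- under the standing hypotheses on `F` (non-normalizable, unique free
variable `x` — here the de Bruijn index `0` — with `x ∈ βΩ(F)`) and `A` (closed, with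
`F[x:=A] ≄ F[x:=Ω]`), for every cofinal reduction sequence `(F_k)` of `F` the associated
tree of pure occurrences of `x` has an infinite good branch: a choice of an occurrence
`p k` of `x` in `F_k` for each `k`, each being good (hence pure) in `F_k`, and `p (k+1)`
being a residue of `p k`. -/
theorem good_infinite_branch (F A : Lam) (Fs : ℕ → Lam)
    (hFnonnorm : ¬ ∃ N, Steps F N ∧ Normal N)
    (hFfree : Free 0 F) (hFonly : ∀ y, Free y F → y = 0)
    (hxbo : ∀ t', BOSteps F t' → Free 0 t')
    (hA : Closed A)
    (hne : ¬ SimH (subst F 0 A) (subst F 0 Omega))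
    (h0 : Fs 0 = F)
    (hstep : ∀ k, Steps (Fs k) (Fs (k + 1)))
    (hcof : ∀ G, Steps F G → ∃ k, Steps G (Fs k)) :
    ∃ p : ℕ → Pos, ∀ k,
      GoodOcc A (Fs k) (p k) ∧ Residue 0 (Fs k) (Fs (k + 1)) (p k) (p (k + 1)) := by
  have hF : ∀ k, Steps F (Fs k) := by
    intro k
    induction k with
    | zero => rw [h0]; exact Relation.ReflTransGen.refl
    | succ k ih => exact ih.trans (hstep k)
  obtain ⟨p, hp⟩ := konig (fun k => Good A 0 (Fs k))
    (fun k => Residue 0 (Fs k) (Fs (k + 1)))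
    (fun k => Good.finite A (Fs k) 0) (fun k => exists_good hA hne (hF k))
    (fun k _ hb => Good.residue hA (hstep k) hb)
  exact ⟨p, fun k => ⟨(hp k).1.goodOcc, (hp k).2⟩⟩
end

section
/- In the λJ-calculus, let t be a solvable term. If ν occurs nicely in t, then ν occurs nicely in every reduct of t; if ν occurs correctly in t, then ν occurs correctly in every reduct of t. -/
/-! ## The λJ-calculus: the untyped λ-calculus extended with a constant `J` and a
distinguished (never bound) variable `ν`, in de Bruijn representation. -/

/-- Terms of the λJ-calculus. -/
inductive JTm : Type where
  | var : ℕ → JTm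
  | jc : JTm            -- the constant `J`
  | nu : JTm            -- the distinguished variable `ν`
  | app : JTm → JTm → JTm
  | abs : JTm → JTm
  deriving DecidableEq

namespace JTm

/-- Lifting of de Bruijn indices (cutoff `d`). -/
def lift (d : ℕ) : JTm → JTm
  | var n => if n < d then var n else var (n + 1)
  | jc => jc
  | nu => nu
  | app a b => app (lift d a) (lift d b)
  | abs a => abs (lift (d + 1) a)

/-- Capture-avoiding substitution of `u` for the variable `k`. -/
def subst : JTm → ℕ → JTm → JTm
  | var n, k, u => if n = k then u else if k < n then var (n - 1) else var n
  | jc, _, _ => jc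
  | nu, _, _ => nu
  | app a b, k, u => app (subst a k u) (subst b k u)
  | abs a, k, u => abs (subst a (k + 1) (lift 0 u))

/-- `n`-fold lifting. -/
def liftN (n : ℕ) (t : JTm) : JTm := (lift 0)^[n] t

/-- `n`-fold abstraction `λy₁…λyₙ.t`. -/
def absN : ℕ → JTm → JTm
  | 0, t => t
  | n + 1, t => abs (absN n t)

/-- Application of a head to a list of arguments. -/
def mkApps (h : JTm) (as : List JTm) : JTm := as.foldl app h

/-- The right-hand side `λy₁…λy_p.(u (J ν y₁) … (J ν y_p))` of the `J`-rule. -/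
def jRhs (p : ℕ) (u : JTm) : JTm :=
  absN p (mkApps (liftN p u) ((List.range p).reverse.map fun i => app (app jc nu) (var i)))

/-- One-step reduction `▷` of the λJ-calculus: β-reduction together with the rule
`(J ν u) ▷ λy₁…λy_p.(u (J ν y₁) … (J ν y_p))`. -/
inductive Step (p : ℕ) : JTm → JTm → Prop
  | beta (a b : JTm) : Step p (app (abs a) b) (subst a 0 b)
  | jrule (u : JTm) : Step p (app (app jc nu) u) (jRhs p u)
  | appL {a a' : JTm} (b : JTm) : Step p a a' → Step p (app a b) (app a' b)
  | appR (a : JTm) {b b' : JTm} : Step p b b' → Step p (app a b) (app a b')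
  | abs {a a' : JTm} : Step p a a' → Step p (JTm.abs a) (JTm.abs a')

/-- `▷*`. -/
def Steps (p : ℕ) : JTm → JTm → Prop := Relation.ReflTransGen (Step p)

/-- `EJ p u e` : `e ∈ E_u`, the least set of terms containing `u` and closed under
`e ↦ (J ν e)` and `e ↦ λy⃗.(e e⃗_y)`, where `y⃗` is a sequence of (fresh) variables and
each component of `e⃗_y` lies in `E_y` for the corresponding variable `y` of `y⃗`
(in de Bruijn style, `λy⃗` of length `n` binds the indices `n-1, …, 0` and `e` is
lifted accordingly). -/
inductive EJ (p : ℕ) : JTm → JTm → Prop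
  | base (u : JTm) : EJ p u u
  | jnu {u e : JTm} : EJ p u e → EJ p u (app (app jc nu) e)
  | lamApp {u e : JTm} (n : ℕ) (as : List JTm) :
      EJ p u e →
      List.Forall₂ (fun i a => EJ p (var i) a) (List.range n).reverse as →
      EJ p u (absN n (mkApps (liftN n e) as))

/-- `t ⤳ t'` : `t = C[u]` and `t' = C[u']` for a one-hole context `C` and `u' ∈ E_u`. -/
inductive Leads (p : ℕ) : JTm → JTm → Prop
  | base {u u' : JTm} : EJ p u u' → Leads p u u'
  | appL {a a' : JTm} (b : JTm) : Leads p a a' → Leads p (app a b) (app a' b)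
  | appR (a : JTm) {b b' : JTm} : Leads p b b' → Leads p (app a b) (app a b')
  | abs {a a' : JTm} : Leads p a a' → Leads p (JTm.abs a) (JTm.abs a')

/-- `⤳*`. -/
def LeadsStar (p : ℕ) : JTm → JTm → Prop := Relation.ReflTransGen (Leads p)

/-- A variable applied to a (possibly empty) list of arguments. -/
inductive HeadVarApp : JTm → Prop
  | var (n : ℕ) : HeadVarApp (var n)
  | app {a : JTm} (b : JTm) : HeadVarApp a → HeadVarApp (app a b)

/-- Head normal forms `λx₁…λxₙ.(y t₁ … tₘ)`. -/
inductive IsHNF : JTm → Prop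
  | head {t : JTm} : HeadVarApp t → IsHNF t
  | abs {a : JTm} : IsHNF a → IsHNF (JTm.abs a)

/-- Solvability in the λJ-calculus. -/
def Solvable (p : ℕ) (t : JTm) : Prop := ∃ h, Steps p t h ∧ IsHNF h

/-- `ν` occurs nicely in `t` : every occurrence of `ν` is inside a subterm `(J ν)`. -/
def Nice : JTm → Prop
  | app jc nu => True
  | app a b => Nice a ∧ Nice b
  | abs a => Nice a
  | nu => False
  | _ => True

/-- `ν` occurs in `t`. -/
def HasNu : JTm → Prop
  | nu => True
  | app a b => HasNu a ∨ HasNu b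
  | abs a => HasNu a
  | _ => False

/-- `ν` occurs correctly in `t` : `ν` occurs nicely in `t` and `t` has a head normal
form of the shape `λx⃗.(x c⃗ e⃗_y)` where `y⃗` is a final subsequence of `x⃗` of length
`k ≥ 1` (the `k` innermost binders, i.e. the de Bruijn indices `k-1, …, 0`), each
component of `e⃗_y` is in `E_y`, and `ν` occurs in `e⃗_y`. -/
def Correct (p : ℕ) (t : JTm) : Prop :=
  Nice t ∧ ∃ (n m k : ℕ) (cs es : List JTm),
    1 ≤ k ∧ es.length = k ∧ k ≤ n ∧
    Steps p t (absN n (mkApps (var m) (cs ++ es))) ∧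
    List.Forall₂ (fun i e => EJ p (var i) e) (List.range k).reverse es ∧
    ∃ e ∈ es, HasNu e

/-- `t` contains no subterm of the form `(ν u)`. -/
def NoNuApp : JTm → Prop
  | app a b => a ≠ nu ∧ NoNuApp a ∧ NoNuApp b
  | abs a => NoNuApp a
  | _ => True

end JTm

namespace JTm

/-! ### Basic de Bruijn lemmas -/

theorem lift_lift (t : JTm) : ∀ i j, i ≤ j → lift i (lift j t) = lift (j + 1) (lift i t) := by
  induction t with
  | var n => intro i j h; simp only [lift]; grind [lift]
  | jc => intros; rfl
  | nu => intros; rfl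
  | app a b iha ihb => intro i j h; simp only [lift]; rw [iha _ _ h, ihb _ _ h]
  | abs a ih => intro i j h; simp only [lift]; rw [ih _ _ (by omega)]

theorem subst_lift (t : JTm) : ∀ k u, subst (lift k t) k u = t := by
  induction t with
  | var n => intro k u; simp only [lift]; grind [subst]
  | jc => intros; rfl
  | nu => intros; rfl
  | app a b iha ihb => intro k u; simp only [lift, subst]; rw [iha, ihb]
  | abs a ih => intro k u; simp only [lift, subst]; rw [ih]

theorem lift_subst_ge (t : JTm) : ∀ k d u, k ≤ d →
    lift d (subst t k u) = subst (lift (d + 1) t) k (lift d u) := by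
  induction t with
  | var n => intro k d u h; simp only [lift, subst]; grind [lift, subst]
  | jc => intros; rfl
  | nu => intros; rfl
  | app a b iha ihb => intro k d u h; simp only [lift, subst]; rw [iha _ _ _ h, ihb _ _ _ h]
  | abs a ih =>
    intro k d u h; simp only [lift, subst]
    rw [ih _ _ _ (by omega), lift_lift u 0 d (by omega)]

theorem lift_subst_le (t : JTm) : ∀ k d u, d ≤ k →
    lift d (subst t k u) = subst (lift d t) (k + 1) (lift d u) := by
  induction t with
  | var n => intro k d u h; simp only [lift, subst]; grind [lift, subst]
  | jc => intros; rfl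
  | nu => intros; rfl
  | app a b iha ihb => intro k d u h; simp only [lift, subst]; rw [iha _ _ _ h, ihb _ _ _ h]
  | abs a ih =>
    intro k d u h; simp only [lift, subst]
    rw [ih _ _ _ (by omega), lift_lift u 0 d (by omega)]

theorem subst_subst (t : JTm) : ∀ i k u v, i ≤ k →
    subst (subst t i u) k v = subst (subst t (k + 1) (lift i v)) i (subst u k v) := by
  induction t with
  | var n =>
    intro i k u v h
    simp only [subst]
    have := subst_lift v i (subst u k v)
    grind [subst]
  | jc => intros; rfl
  | nu => intros; rfl
  | app a b iha ihb => intro i k u v h; simp only [subst]; rw [iha _ _ _ _ h, ihb _ _ _ _ h]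
  | abs a ih =>
    intro i k u v h; simp only [subst]
    rw [ih _ _ _ _ (by omega), lift_lift v 0 i (by omega), lift_subst_le u k 0 v (by omega)]

theorem liftN_zero (t : JTm) : liftN 0 t = t := rfl

theorem liftN_succ (n : ℕ) (t : JTm) : liftN (n + 1) t = lift 0 (liftN n t) := by
  simp [liftN, Function.iterate_succ_apply']

theorem liftN_succ' (n : ℕ) (t : JTm) : liftN (n + 1) t = liftN n (lift 0 t) := by
  simp [liftN]

theorem liftN_add (m n : ℕ) (t : JTm) : liftN m (liftN n t) = liftN (n + m) t := by
  rw [add_comm]; simp [liftN, Function.iterate_add_apply]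

theorem liftN_var (n i : ℕ) : liftN n (var i) = var (i + n) := by
  induction n with
  | zero => rfl
  | succ n ih => rw [liftN_succ, ih]; simp [lift]; omega

theorem lift_liftN (n d : ℕ) (t : JTm) : lift (d + n) (liftN n t) = liftN n (lift d t) := by
  induction n with
  | zero => rfl
  | succ n ih => rw [liftN_succ, liftN_succ, ← ih, lift_lift _ 0 (d + n) (by omega)]; rfl

theorem subst_liftN (n k : ℕ) (t u : JTm) :
    subst (liftN n t) (k + n) (liftN n u) = liftN n (subst t k u) := by
  induction n with
  | zero => rfl
  | succ n ih =>
    rw [liftN_succ, liftN_succ, liftN_succ, ← ih, lift_subst_le _ _ 0 _ (by omega)]; rfl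

theorem lift_absN (n d : ℕ) (t : JTm) : lift d (absN n t) = absN n (lift (d + n) t) := by
  induction n generalizing d with
  | zero => rfl
  | succ n ih => simp only [absN, lift, ih]; congr 3; omega

theorem subst_absN (n k : ℕ) (t u : JTm) :
    subst (absN n t) k u = absN n (subst t (k + n) (liftN n u)) := by
  induction n generalizing k u with
  | zero => rfl
  | succ n ih => simp only [absN, subst, ih, liftN_succ']; congr 3; omega

theorem absN_add (m n : ℕ) (t : JTm) : absN m (absN n t) = absN (m + n) t := by
  induction m with
  | zero => simp [absN]
  | succ m ih => rw [Nat.succ_add]; simp only [absN, ih]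

theorem mkApps_nil (h : JTm) : mkApps h [] = h := rfl

theorem mkApps_cons (h a : JTm) (as : List JTm) : mkApps h (a :: as) = mkApps (app h a) as := rfl

theorem mkApps_concat (h a : JTm) (as : List JTm) :
    mkApps h (as ++ [a]) = app (mkApps h as) a := by
  simp [mkApps]

theorem lift_mkApps (d : ℕ) (h : JTm) (as : List JTm) :
    lift d (mkApps h as) = mkApps (lift d h) (as.map (lift d)) := by
  induction as generalizing h with
  | nil => rfl
  | cons a as ih => simp only [mkApps_cons, List.map_cons, ih, lift]

theorem subst_mkApps (k : ℕ) (u h : JTm) (as : List JTm) :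
    subst (mkApps h as) k u = mkApps (subst h k u) (as.map (fun a => subst a k u)) := by
  induction as generalizing h with
  | nil => rfl
  | cons a as ih => simp only [mkApps_cons, List.map_cons, ih, subst]

theorem lift_jRhs (p d : ℕ) (u : JTm) : lift d (jRhs p u) = jRhs p (lift d u) := by
  simp only [jRhs, lift_absN, lift_mkApps, lift_liftN, List.map_map]
  congr 2
  apply List.map_congr_left
  intro i hi
  have : i < p := by simpa using hi
  simp [lift]; omega

theorem subst_jRhs (p k : ℕ) (u v : JTm) : subst (jRhs p u) k v = jRhs p (subst u k v) := by
  simp only [jRhs, subst_absN, subst_mkApps, subst_liftN, List.map_map]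
  congr 2
  apply List.map_congr_left
  intro i hi
  have : i < p := by simpa using hi
  simp only [Function.comp, subst]
  rw [if_neg (by omega), if_neg (by omega)]

/-! ### Niceness -/

theorem nice_app (a b : JTm) : Nice (app a b) ↔ (a = jc ∧ b = nu) ∨ (Nice a ∧ Nice b) := by
  cases a <;> cases b <;> simp [Nice]

theorem nice_lift (t : JTm) : ∀ d, Nice t → Nice (lift d t) := by
  induction t with
  | var n => intro d _; simp only [lift]; split <;> trivial
  | jc => intros; trivial
  | nu => intro d h; exact h
  | app a b iha ihb =>
    intro d h
    simp only [lift]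
    rw [nice_app] at h ⊢
    rcases h with ⟨rfl, rfl⟩ | ⟨h1, h2⟩
    · left; exact ⟨rfl, rfl⟩
    · right; exact ⟨iha _ h1, ihb _ h2⟩
  | abs a ih => intro d h; exact ih (d + 1) h

theorem nice_subst (t : JTm) : ∀ k u, Nice t → Nice u → Nice (subst t k u) := by
  induction t with
  | var n => intro k u _ hu; simp only [subst]; split_ifs <;> first | exact hu | trivial
  | jc => intros; trivial
  | nu => intro k u h _; exact h
  | app a b iha ihb =>
    intro k u h hu
    simp only [subst]
    rw [nice_app] at h ⊢
    rcases h with ⟨rfl, rfl⟩ | ⟨h1, h2⟩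
    · left; exact ⟨rfl, rfl⟩
    · right; exact ⟨iha _ _ h1 hu, ihb _ _ h2 hu⟩
  | abs a ih => intro k u h hu; exact ih (k + 1) _ h (nice_lift _ _ hu)

theorem nice_liftN (n : ℕ) (t : JTm) (h : Nice t) : Nice (liftN n t) := by
  induction n with
  | zero => exact h
  | succ n ih => rw [liftN_succ]; exact nice_lift _ _ ih

theorem nice_absN (n : ℕ) (t : JTm) (h : Nice t) : Nice (absN n t) := by
  induction n with
  | zero => exact h
  | succ n ih => exact ih

theorem nice_mkApps (as : List JTm) : ∀ h, Nice h → (∀ a ∈ as, Nice a) → Nice (mkApps h as) := by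
  induction as with
  | nil => intro h hh _; exact hh
  | cons a as ih =>
    intro h hh hs
    rw [mkApps_cons]
    apply ih
    · rw [nice_app]; right; exact ⟨hh, hs a (by simp)⟩
    · intro b hb; exact hs b (by simp [hb])

theorem nice_step {p : ℕ} {t t' : JTm} (h : Step p t t') : Nice t → Nice t' := by
  induction h with
  | beta a b =>
    intro h
    rw [nice_app] at h
    rcases h with ⟨h, _⟩ | ⟨h1, h2⟩
    · cases h
    · exact nice_subst _ _ _ h1 h2
  | jrule u =>
    intro h
    rw [nice_app] at h
    rcases h with ⟨h, _⟩ | ⟨h1, h2⟩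
    · cases h
    · apply nice_absN
      apply nice_mkApps
      · exact nice_liftN _ _ h2
      · intro a ha
        simp only [List.mem_map] at ha
        obtain ⟨i, _, rfl⟩ := ha
        simp [Nice]
  | appL b hs ih =>
    intro h
    rw [nice_app] at h ⊢
    rcases h with ⟨rfl, _⟩ | ⟨h1, h2⟩
    · cases hs
    · right; exact ⟨ih h1, h2⟩
  | appR a hs ih =>
    intro h
    rw [nice_app] at h ⊢
    rcases h with ⟨_, rfl⟩ | ⟨h1, h2⟩
    · cases hs
    · right; exact ⟨h1, ih h2⟩
  | abs hs ih => intro h; exact ih h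

theorem nice_steps {p : ℕ} {t t' : JTm} (h : Steps p t t') (ht : Nice t) : Nice t' := by
  induction h with
  | refl => exact ht
  | tail _ hs ih => exact nice_step hs ih

/-! ### Congruence of `▷*` -/

theorem Steps.refl {p : ℕ} (t : JTm) : Steps p t t := Relation.ReflTransGen.refl

theorem Steps.trans {p : ℕ} {a b c : JTm} (h : Steps p a b) (h' : Steps p b c) : Steps p a c :=
  Relation.ReflTransGen.trans h h'

theorem Steps.single {p : ℕ} {a b : JTm} (h : Step p a b) : Steps p a b :=
  Relation.ReflTransGen.single h

theorem steps_map {p : ℕ} (f : JTm → JTm) (hf : ∀ a b, Step p a b → Step p (f a) (f b))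
    {a b : JTm} (h : Steps p a b) : Steps p (f a) (f b) := by
  induction h with
  | refl => exact Steps.refl _
  | tail _ hs ih => exact ih.trans (Steps.single (hf _ _ hs))

theorem Steps.app {p : ℕ} {a a' b b' : JTm} (h : Steps p a a') (h' : Steps p b b') :
    Steps p (app a b) (app a' b') := by
  have h1 : Steps p (JTm.app a b) (JTm.app a' b) :=
    steps_map (fun x => JTm.app x b) (fun _ _ hs => Step.appL b hs) h
  have h2 : Steps p (JTm.app a' b) (JTm.app a' b') :=
    steps_map (fun x => JTm.app a' x) (fun _ _ hs => Step.appR a' hs) h'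
  exact h1.trans h2

theorem Steps.abs {p : ℕ} {a a' : JTm} (h : Steps p a a') : Steps p (abs a) (abs a') :=
  steps_map JTm.abs (fun _ _ hs => Step.abs hs) h

theorem Steps.absN {p : ℕ} {a a' : JTm} (n : ℕ) (h : Steps p a a') :
    Steps p (absN n a) (absN n a') := by
  induction n with
  | zero => exact h
  | succ n ih => exact ih.abs

theorem Steps.mkApps {p : ℕ} {h h' : JTm} (as : List JTm) (hs : Steps p h h') :
    Steps p (mkApps h as) (mkApps h' as) := by
  induction as generalizing h h' with
  | nil => exact hs
  | cons a as ih => exact ih (hs.app (Steps.refl a))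

theorem step_lift {p : ℕ} {t t' : JTm} (h : Step p t t') : ∀ d, Step p (lift d t) (lift d t') := by
  induction h with
  | beta a b =>
    intro d; rw [lift_subst_ge _ _ _ _ (Nat.zero_le d)]; exact Step.beta _ _
  | jrule u => intro d; rw [lift_jRhs]; exact Step.jrule _
  | appL b hs ih => intro d; exact Step.appL _ (ih d)
  | appR a hs ih => intro d; exact Step.appR _ (ih d)
  | abs hs ih => intro d; exact Step.abs (ih _)

theorem steps_lift {p : ℕ} {t t' : JTm} (d : ℕ) (h : Steps p t t') :
    Steps p (lift d t) (lift d t') :=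
  steps_map (lift d) (fun _ _ hs => step_lift hs d) h

theorem steps_liftN {p : ℕ} {t t' : JTm} (n : ℕ) (h : Steps p t t') :
    Steps p (liftN n t) (liftN n t') := by
  induction n with
  | zero => exact h
  | succ n ih => rw [liftN_succ, liftN_succ]; exact steps_lift 0 ih

theorem step_subst {p : ℕ} {t t' : JTm} (h : Step p t t') :
    ∀ k u, Step p (subst t k u) (subst t' k u) := by
  induction h with
  | beta a b =>
    intro k u; rw [subst_subst _ _ _ _ _ (Nat.zero_le k)]; exact Step.beta _ _
  | jrule v => intro k u; rw [subst_jRhs]; exact Step.jrule _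
  | appL b hs ih => intro k u; exact Step.appL _ (ih k u)
  | appR a hs ih => intro k u; exact Step.appR _ (ih k u)
  | abs hs ih => intro k u; exact Step.abs (ih _ _)

theorem steps_subst_right {p : ℕ} (t : JTm) : ∀ {k u u'}, Steps p u u' →
    Steps p (subst t k u) (subst t k u') := by
  induction t with
  | var n => intro k u u' h; simp only [subst]; split_ifs <;> first | exact h | exact Steps.refl _
  | jc => intros; exact Steps.refl _
  | nu => intros; exact Steps.refl _
  | app a b iha ihb => intro k u u' h; exact (iha h).app (ihb h)
  | abs a ih => intro k u u' h; exact (ih (steps_lift 0 h)).abs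

theorem steps_subst {p : ℕ} {t t' u u' : JTm} (k : ℕ) (h : Steps p t t') (h' : Steps p u u') :
    Steps p (subst t k u) (subst t' k u') :=
  Steps.trans (steps_map (fun x => subst x k u) (fun _ _ hs => step_subst hs k u) h)
    (steps_subst_right t' h')

theorem steps_jRhs {p : ℕ} {u u' : JTm} (h : Steps p u u') : Steps p (jRhs p u) (jRhs p u') :=
  ((steps_liftN p h).mkApps _).absN p

/-! ### Superdevelopments and the Z property -/

/-- Application contracting the redex it may create. -/
def appStar (p : ℕ) : JTm → JTm → JTm
  | abs c, b => subst c 0 b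
  | app jc nu, b => jRhs p b
  | a, b => app a b

/-- Complete superdevelopment. -/
def star (p : ℕ) : JTm → JTm
  | var n => var n
  | jc => jc
  | nu => nu
  | app a b => appStar p (star p a) (star p b)
  | abs a => abs (star p a)

/-- `a` applied to something is not a redex. -/
def Inert (a : JTm) : Prop := (∀ c, a ≠ abs c) ∧ a ≠ app jc nu

theorem appStar_inert {p : ℕ} {a : JTm} (b : JTm) (h : Inert a) : appStar p a b = app a b := by
  unfold appStar
  split
  · exact absurd rfl (h.1 _)
  · exact absurd rfl h.2
  · rfl

theorem inert_cases (a : JTm) : (∃ c, a = abs c) ∨ a = app jc nu ∨ Inert a := by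
  by_cases h : ∃ c, a = abs c
  · exact Or.inl h
  · by_cases h' : a = app jc nu
    · exact Or.inr (Or.inl h')
    · exact Or.inr (Or.inr ⟨fun c hc => h ⟨c, hc⟩, h'⟩)

theorem steps_appStar {p : ℕ} (a b : JTm) : Steps p (app a b) (appStar p a b) := by
  rcases inert_cases a with ⟨c, rfl⟩ | rfl | h
  · exact Steps.single (Step.beta _ _)
  · exact Steps.single (Step.jrule _)
  · rw [appStar_inert _ h]; exact Steps.refl _

theorem appStar_mono_left {p : ℕ} {a a' : JTm} (b : JTm) (h : Step p a a') :
    Steps p (appStar p a b) (appStar p a' b) := by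
  rcases inert_cases a with ⟨c, rfl⟩ | rfl | hi
  · cases h with
    | abs h => exact Steps.single (step_subst h 0 b)
  · cases h with
    | appL _ h => cases h
    | appR _ h => cases h
  · rw [appStar_inert _ hi]
    exact ((Steps.single h).app (Steps.refl b)).trans (steps_appStar _ _)

theorem appStar_mono {p : ℕ} {a a' b b' : JTm} (h : Steps p a a') (h' : Steps p b b') :
    Steps p (appStar p a b) (appStar p a' b') := by
  have h1 : Steps p (appStar p a b) (appStar p a' b) := by
    induction h with
    | refl => exact Steps.refl _
    | tail _ hs ih => exact ih.trans (appStar_mono_left b hs)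
  refine h1.trans ?_
  rcases inert_cases a' with ⟨c, rfl⟩ | rfl | hi
  · exact steps_subst_right c h'
  · exact steps_jRhs h'
  · rw [appStar_inert _ hi, appStar_inert _ hi]
    exact (Steps.refl _).app h'

theorem subst_appStar {p : ℕ} (a b u : JTm) (k : ℕ) :
    Steps p (subst (appStar p a b) k u) (appStar p (subst a k u) (subst b k u)) := by
  rcases inert_cases a with ⟨c, rfl⟩ | rfl | hi
  · simp only [appStar, subst]
    rw [subst_subst _ _ _ _ _ (Nat.zero_le k)]; exact Steps.refl _
  · simp only [appStar, subst, subst_jRhs]; exact Steps.refl _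
  · rw [appStar_inert _ hi]; exact steps_appStar _ _

theorem inert_lift {a : JTm} (d : ℕ) (h : Inert a) : Inert (lift d a) := by
  cases a with
  | var n => simp only [lift]; split <;> simp [Inert]
  | jc => simp [lift, Inert]
  | nu => simp [lift, Inert]
  | abs c => exact absurd rfl (h.1 c)
  | app a b =>
    refine ⟨by simp [lift], ?_⟩
    intro hc
    apply h.2
    simp only [lift, app.injEq] at hc
    obtain ⟨h1, h2⟩ := hc
    cases a <;> cases b <;> simp_all [lift] <;> grind

theorem lift_appStar {p : ℕ} (a b : JTm) (d : ℕ) :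
    lift d (appStar p a b) = appStar p (lift d a) (lift d b) := by
  rcases inert_cases a with ⟨c, rfl⟩ | rfl | hi
  · simp only [appStar, lift]
    rw [lift_subst_ge _ _ _ _ (Nat.zero_le d)]
  · simp only [appStar, lift, lift_jRhs]
  · rw [appStar_inert _ hi, appStar_inert _ (inert_lift d hi)]; rfl

theorem star_lift {p : ℕ} (t : JTm) : ∀ d, star p (lift d t) = lift d (star p t) := by
  induction t with
  | var n => intro d; simp only [lift, star]; split <;> rfl
  | jc => intros; rfl
  | nu => intros; rfl
  | app a b iha ihb => intro d; simp only [lift, star, iha, ihb, lift_appStar]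
  | abs a ih => intro d; simp only [lift, star, ih]

theorem star_liftN {p : ℕ} (n : ℕ) (t : JTm) : star p (liftN n t) = liftN n (star p t) := by
  induction n with
  | zero => rfl
  | succ n ih => rw [liftN_succ, liftN_succ, star_lift, ih]

theorem star_absN {p : ℕ} (n : ℕ) (t : JTm) : star p (absN n t) = absN n (star p t) := by
  induction n with
  | zero => rfl
  | succ n ih => simp only [absN, star, ih]

theorem star_mkApps {p : ℕ} (as : List JTm) : ∀ h : JTm,
    star p (mkApps h as) = (as.map (star p)).foldl (appStar p) (star p h) := by
  induction as with
  | nil => intro h; rfl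
  | cons a as ih => intro h; rw [mkApps_cons, ih]; rfl

theorem steps_star {p : ℕ} (t : JTm) : Steps p t (star p t) := by
  induction t with
  | var n => exact Steps.refl _
  | jc => exact Steps.refl _
  | nu => exact Steps.refl _
  | app a b iha ihb => exact (iha.app ihb).trans (steps_appStar _ _)
  | abs a ih => exact ih.abs

theorem subst_star {p : ℕ} (t : JTm) : ∀ k u,
    Steps p (subst (star p t) k (star p u)) (star p (subst t k u)) := by
  induction t with
  | var n =>
    intro k u; simp only [star, subst]
    split_ifs <;> exact Steps.refl _
  | jc => intros; exact Steps.refl _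
  | nu => intros; exact Steps.refl _
  | app a b iha ihb =>
    intro k u
    exact (subst_appStar _ _ _ _).trans (appStar_mono (iha k u) (ihb k u))
  | abs a ih =>
    intro k u
    have := ih (k + 1) (lift 0 u)
    rw [star_lift] at this
    exact this.abs

theorem step_to_star {p : ℕ} {t t' : JTm} (h : Step p t t') : Steps p t' (star p t) := by
  induction h with
  | beta a b => exact steps_subst 0 (steps_star a) (steps_star b)
  | jrule u => exact steps_jRhs (steps_star u)
  | appL b hs ih => exact (ih.app (steps_star b)).trans (steps_appStar _ _)
  | appR a hs ih => exact ((steps_star a).app ih).trans (steps_appStar _ _)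
  | abs hs ih => exact ih.abs

theorem steps_mkApps_foldl {p : ℕ} (as : List JTm) : ∀ h h' : JTm, Steps p h h' →
    Steps p (mkApps h as) ((as.map (star p)).foldl (appStar p) h') := by
  induction as with
  | nil => intro h h' hs; exact hs
  | cons a as ih =>
    intro h h' hs
    rw [mkApps_cons]
    exact ih _ _ ((hs.app (steps_star a)).trans (steps_appStar _ _))

theorem star_mono_step {p : ℕ} {t t' : JTm} (h : Step p t t') :
    Steps p (star p t) (star p t') := by
  induction h with
  | beta a b => exact subst_star a 0 b
  | jrule u =>
    change Steps p (jRhs p (star p u)) _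
    unfold jRhs
    rw [star_absN, star_mkApps, star_liftN]
    exact (steps_mkApps_foldl _ _ _ (Steps.refl _)).absN p
  | appL b hs ih => exact appStar_mono ih (Steps.refl _)
  | appR a hs ih => exact appStar_mono (Steps.refl _) ih
  | abs hs ih => exact ih.abs

theorem star_mono {p : ℕ} {t t' : JTm} (h : Steps p t t') : Steps p (star p t) (star p t') := by
  induction h with
  | refl => exact Steps.refl _
  | tail _ hs ih => exact ih.trans (star_mono_step hs)

theorem star_iter_mono {p : ℕ} {t t' : JTm} (n : ℕ) (h : Steps p t t') :
    Steps p ((star p)^[n] t) ((star p)^[n] t') := by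
  induction n with
  | zero => exact h
  | succ n ih =>
    rw [Function.iterate_succ_apply', Function.iterate_succ_apply']; exact star_mono ih

/-- Iterated superdevelopments are cofinal. -/
theorem star_cofinal {p : ℕ} {t t' : JTm} (h : Steps p t t') :
    ∃ n, Steps p t' ((star p)^[n] t) := by
  induction h with
  | refl => exact ⟨0, Steps.refl _⟩
  | tail _ hs ih =>
    obtain ⟨n, hn⟩ := ih
    refine ⟨n + 1, ?_⟩
    rw [Function.iterate_succ_apply']
    exact (step_to_star hs).trans (star_mono hn)

/-! ### The sets `E_u` -/

@[elab_as_elim]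
theorem EJ.ind {p : ℕ} {motive : JTm → JTm → Prop}
    (base : ∀ u, motive u u)
    (jnu : ∀ u e, EJ p u e → motive u e → motive u (JTm.app (JTm.app jc JTm.nu) e))
    (lamApp : ∀ u e (n : ℕ) (as : List JTm), EJ p u e → motive u e →
      List.Forall₂ (fun i a => EJ p (JTm.var i) a ∧ motive (JTm.var i) a)
        (List.range n).reverse as →
      motive u (JTm.absN n (JTm.mkApps (liftN n e) as)))
    {u e : JTm} (h : EJ p u e) : motive u e := by
  refine EJ.rec (p := p) (motive_1 := fun u e _ => motive u e)
    (motive_2 := fun l as _ =>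
      List.Forall₂ (fun i a => EJ p (JTm.var i) a ∧ motive (JTm.var i) a) l as)
    base ?_ ?_ ?_ ?_ h
  · intro u e he ih; exact jnu u e he ih
  · intro u e n as he has ih ihs; exact lamApp u e n as he ih ihs
  · exact List.Forall₂.nil
  · intro i a l as ha hs iha ihs
    exact List.Forall₂.cons ⟨ha, iha⟩ ihs

theorem forall₂_map_mem {α β γ : Type} {R : α → β → Prop} {S : α → γ → Prop} {f : β → γ}
    {l : List α} {as : List β} (h : List.Forall₂ R l as)
    (H : ∀ i a, i ∈ l → R i a → S i (f a)) : List.Forall₂ S l (as.map f) := by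
  induction h with
  | nil => exact List.Forall₂.nil
  | cons hr _ ih =>
    refine List.Forall₂.cons (H _ _ (by simp) hr) (ih ?_)
    intro i a hi; exact H i a (by simp [hi])

theorem EJ.lift {p : ℕ} {u e : JTm} (h : EJ p u e) : ∀ d, EJ p (lift d u) (lift d e) := by
  refine EJ.ind ?base ?jnu ?lamApp h
  case base =>
    intro u
    intro d; exact EJ.base _
  case jnu =>
    intro u e _ ih
    intro d; exact EJ.jnu (ih d)
  case lamApp =>
    intro u e n as _ ih ihs
    intro d
    rw [lift_absN, lift_mkApps, lift_liftN]
    refine EJ.lamApp n _ (ih d) (forall₂_map_mem ihs ?_)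
    intro i a hi ha
    have hi' : i < n := by simpa using hi
    have := ha.2 (d + n)
    simp only [JTm.lift] at this
    rwa [if_pos (by omega)] at this

theorem EJ.liftN {p : ℕ} {u e : JTm} (n : ℕ) (h : EJ p u e) : EJ p (liftN n u) (liftN n e) := by
  induction n with
  | zero => exact h
  | succ n ih => rw [liftN_succ, liftN_succ]; exact ih.lift 0

theorem EJ.subst {p : ℕ} {u e : JTm} (h : EJ p u e) :
    ∀ k f, EJ p (subst u k f) (subst e k f) := by
  refine EJ.ind ?base ?jnu ?lamApp h
  case base =>
    intro u
    intro k f; exact EJ.base _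
  case jnu =>
    intro u e _ ih
    intro k f; exact EJ.jnu (ih k f)
  case lamApp =>
    intro u e n as _ ih ihs
    intro k f
    rw [subst_absN, subst_mkApps, subst_liftN]
    refine EJ.lamApp n _ (ih k f) (forall₂_map_mem ihs ?_)
    intro i a hi ha
    have hi' : i < n := by simpa using hi
    have := ha.2 (k + n) (JTm.liftN n f)
    simp only [JTm.subst] at this
    rwa [if_neg (by omega), if_neg (by omega)] at this

theorem EJ.trans {p : ℕ} {u v w : JTm} (h : EJ p u v) (h' : EJ p v w) : EJ p u w := by
  revert h
  refine EJ.ind ?base ?jnu ?lamApp h'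
  case base =>
    intro u h; exact h
  case jnu =>
    intro v e _ ih
    intro h; exact EJ.jnu (ih h)
  case lamApp =>
    intro v e n as _ ih ihs
    intro h
    exact EJ.lamApp n _ (ih h) (ihs.imp (fun _ _ hh => hh.1))

/-- Elements of `E_u` for `u` a variable contain no bare `ν`, `J` or `J ν`. -/
theorem EJ.ne_nu {p : ℕ} {u e : JTm} (h : EJ p u e) :
    (∃ i, u = var i) → e ≠ nu ∧ e ≠ app jc nu := by
  refine EJ.ind ?base ?jnu ?lamApp h
  case base =>
    intro u
    rintro ⟨i, rfl⟩; simp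
  case jnu =>
    intro u e _ ih
    intro hu; simp
  case lamApp =>
    intro u e n as _ ih ihs
    intro hu
    cases n with
    | succ n => simp [JTm.absN]
    | zero =>
      have : as = [] := by cases ihs; rfl
      subst this
      exact ih hu

/-- A spine: `λz⃗.(h c⃗)` with the `c⃗` in the `E`-sets of `ys` and of `z⃗`. -/
def Spine (p : ℕ) (h : JTm) (ys : List ℕ) (T : JTm) : Prop :=
  ∃ (r : ℕ) (cs : List JTm), T = absN r (mkApps (liftN r h) cs) ∧
    List.Forall₂ (fun i a => EJ p (var i) a) (ys.map (· + r) ++ (List.range r).reverse) cs ∧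
    (r = 0 → ∀ c, T ≠ abs c)

theorem Spine.lift {p : ℕ} {h T : JTm} (H : Spine p h [] T) :
    Spine p (lift 0 h) [] (lift 0 T) := by
  obtain ⟨r, cs, rfl, hcs, hr⟩ := H
  refine ⟨r, cs.map (JTm.lift r), ?_, ?_, ?_⟩
  · rw [lift_absN, lift_mkApps, lift_liftN, Nat.zero_add]
  · refine forall₂_map_mem hcs ?_
    intro i a hi ha
    have hi' : i < r := by simpa using hi
    have := ha.lift r
    simp only [JTm.lift] at this
    rwa [if_pos hi'] at this
  · intro h0 c hc
    have := hr h0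
    revert hc this
    generalize JTm.absN r (JTm.mkApps (JTm.liftN r h) cs) = T
    intro hc this
    cases T with
    | var n => simp only [JTm.lift] at hc; split at hc <;> cases hc
    | jc => cases hc
    | nu => cases hc
    | app a b => cases hc
    | abs a => exact this a rfl

theorem Spine.liftN {p : ℕ} {h T : JTm} (n : ℕ) (H : Spine p h [] T) :
    Spine p (liftN n h) [] (liftN n T) := by
  induction n with
  | zero => exact H
  | succ n ih => rw [liftN_succ, liftN_succ]; exact ih.lift

theorem EJ.spine {p : ℕ} {u e : JTm} (h : EJ p u e) :
    (∃ i, u = var i) → ∃ h, EJ p u h ∧ Spine p h [] e := by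
  refine EJ.ind ?base ?jnu ?lamApp h
  case base =>
    intro u
    rintro ⟨i, rfl⟩
    exact ⟨_, EJ.base _, 0, [], rfl, by simp, by simp⟩
  case jnu =>
    intro u e he ih
    intro _
    exact ⟨_, EJ.jnu he, 0, [], rfl, by simp, by simp⟩
  case lamApp =>
    intro u e n as he ih ihs
    intro hu
    cases n with
    | zero =>
      have : as = [] := by cases ihs; rfl
      subst this
      exact ih hu
    | succ n =>
      refine ⟨e, he, n + 1, as, rfl, ?_, by simp⟩
      simpa using ihs.imp (fun _ _ hh => hh.1)

theorem forall₂_concat {α β : Type} {R : α → β → Prop} {l : List α} {as : List β} {x : α} {y : β}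
    (h : List.Forall₂ R l as) (hxy : R x y) : List.Forall₂ R (l ++ [x]) (as ++ [y]) := by
  induction h with
  | nil => exact List.Forall₂.cons hxy List.Forall₂.nil
  | cons h1 _ ih => exact List.Forall₂.cons h1 ih

theorem mkApps_inert {p : ℕ} {h : JTm} {ys : List ℕ} {cs : List JTm} (hh : h ≠ app jc nu)
    (hcs : List.Forall₂ (fun i a => EJ p (var i) a) ys cs)
    (hab : ∀ c, mkApps h cs ≠ abs c) : Inert (mkApps h cs) := by
  refine ⟨hab, ?_⟩
  rcases List.eq_nil_or_concat cs with rfl | ⟨cs', c, rfl⟩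
  · exact hh
  · rw [List.concat_eq_append] at *
    rw [mkApps_concat]
    intro hc
    simp only [app.injEq] at hc
    have hmem : ∀ b ∈ cs' ++ [c], b ≠ nu := by
      clear hc hab
      generalize cs' ++ [c] = l at hcs
      induction hcs with
      | nil => simp
      | cons h1 _ ih =>
        intro b hb
        rcases List.mem_cons.1 hb with rfl | hb
        · exact (h1.ne_nu ⟨_, rfl⟩).1
        · exact ih b hb
    exact hmem c (by simp) hc.2

theorem Spine.appStar {p : ℕ} {h T a : JTm} {ys : List ℕ} {y : ℕ} (hh : h ≠ JTm.app jc nu)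
    (H : Spine p h ys T) (ha : EJ p (var y) a) :
    Spine p h (ys ++ [y]) (appStar p T a) := by
  obtain ⟨r, cs, rfl, hcs, hr⟩ := H
  cases r with
  | zero =>
    simp only [JTm.absN, liftN_zero, forall_const] at hr ⊢
    simp only [add_zero, List.map_id', List.range_zero, List.reverse_nil, List.append_nil] at hcs
    rw [appStar_inert _ (mkApps_inert hh hcs hr)]
    refine ⟨0, cs ++ [a], ?_, ?_, by simp⟩
    · rw [mkApps_concat]; rfl
    · simpa using forall₂_concat hcs ha
  | succ r =>
    simp only [JTm.absN, JTm.appStar]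
    rw [subst_absN, subst_mkApps, Nat.zero_add]
    have e1 : JTm.subst (JTm.liftN (r + 1) h) r (JTm.liftN r a) = JTm.liftN r h := by
      have := subst_liftN r 0 (JTm.lift 0 h) a
      rw [Nat.zero_add, subst_lift, ← liftN_succ'] at this
      exact this
    rw [e1]
    have key : List.Forall₂ (fun i b => EJ p (var i) b)
        ((ys ++ [y]).map (· + r) ++ (List.range r).reverse)
        (cs.map (fun b => JTm.subst b r (JTm.liftN r a))) := by
      have e2 : (ys ++ [y]).map (· + r) ++ (List.range r).reverse =
          (ys.map (· + (r + 1)) ++ (List.range (r + 1)).reverse).map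
            (fun i => if i = r then y + r else if r < i then i - 1 else i) := by
        rw [List.range_succ]
        simp only [List.map_append, List.reverse_append, List.map_map, List.append_assoc,
          List.reverse_singleton, List.map_cons, List.map_nil, if_true]
        congr 1
        · apply List.map_congr_left
          intro i _
          simp only [Function.comp]
          rw [if_neg (by omega), if_pos (by omega)]; omega
        · congr 1
          conv_lhs => rw [← List.map_id (List.range r).reverse]
          apply List.map_congr_left
          intro i hi
          have : i < r := by simpa using hi
          rw [if_neg (by omega), if_neg (by omega)]; rfl
      rw [e2, List.forall₂_map_left_iff]
      refine forall₂_map_mem hcs ?_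
      intro i b _ hb
      have h1 := hb.subst r (JTm.liftN r a)
      simp only [JTm.subst] at h1
      have h2 := ha.liftN r
      rw [liftN_var] at h2
      split_ifs at h1 ⊢
      · exact h2.trans h1
      · exact h1
      · exact h1
    refine ⟨r, _, rfl, key, ?_⟩
    intro h0 c
    subst h0
    have hne : cs ≠ [] := by
      rintro rfl
      have := hcs.length_eq
      simp at this
    rcases List.eq_nil_or_concat cs with rfl | ⟨cs', c', rfl⟩
    · exact absurd rfl hne
    · rw [List.concat_eq_append, List.map_append, List.map_singleton, mkApps_concat]
      simp [JTm.absN]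

theorem Spine.foldl {p : ℕ} {h : JTm} (hh : h ≠ JTm.app jc nu) {zs : List ℕ} {as : List JTm}
    (has : List.Forall₂ (fun i a => EJ p (var i) a) zs as) :
    ∀ {ys T}, Spine p h ys T → Spine p h (ys ++ zs) (as.foldl (JTm.appStar p) T) := by
  induction has with
  | nil => intro ys T H; simpa using H
  | cons h1 _ ih =>
    intro ys T H
    have := ih (H.appStar hh h1)
    simpa using this

theorem range_reverse_add (n r : ℕ) :
    (List.range n).reverse.map (· + r) ++ (List.range r).reverse = (List.range (n + r)).reverse := by
  rw [add_comm n r, List.range_add, List.reverse_append, List.map_reverse]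
  congr 3
  funext x; omega

theorem EJ.star {p : ℕ} {u e : JTm} (h : EJ p u e) :
    (∃ i, u = var i) → EJ p u (star p e) := by
  refine EJ.ind ?base ?jnu ?lamApp h
  case base =>
    intro u
    rintro ⟨i, rfl⟩; exact EJ.base _
  case jnu =>
    intro u e _ ih
    intro hu
    refine EJ.lamApp p _ (ih hu) ?_
    rw [List.forall₂_map_right_iff, List.forall₂_same]
    intro i _
    exact EJ.jnu (EJ.base _)
  case lamApp =>
    intro u e n as he ih ihs
    intro hu
    rw [star_absN, star_mkApps, star_liftN]
    have hS : List.Forall₂ (fun i a => EJ p (var i) a) (List.range n).reverse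
        (as.map (JTm.star p)) :=
      forall₂_map_mem ihs (fun i a _ ha => ha.2 ⟨i, rfl⟩)
    obtain ⟨h, hh, hsp⟩ := (ih hu).spine hu
    obtain ⟨i, rfl⟩ := hu
    have hh' := hh.liftN n
    rw [liftN_var] at hh'
    obtain ⟨r, cs, hT, hcs, -⟩ :=
      Spine.foldl (hh'.ne_nu ⟨_, rfl⟩).2 hS (hsp.liftN n)
    rw [hT, absN_add, liftN_add]
    refine EJ.lamApp _ _ hh ?_
    rw [List.nil_append, range_reverse_add] at hcs
    exact hcs

/-! ### The `λI` invariant: no erasure -/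

/-- The variable `k` occurs in the term. -/
def Occ : ℕ → JTm → Prop
  | k, var n => n = k
  | _, jc => False
  | _, nu => False
  | k, app a b => Occ k a ∨ Occ k b
  | k, abs a => Occ (k + 1) a

/-- Every abstraction binds an occurring variable. -/
def LI : JTm → Prop
  | abs a => Occ 0 a ∧ LI a
  | app a b => LI a ∧ LI b
  | _ => True

theorem occ_lift (t : JTm) : ∀ k d, Occ k t → Occ (if k < d then k else k + 1) (lift d t) := by
  induction t with
  | var n => intro k d h; simp only [Occ] at h; subst h; simp only [lift]; split <;> simp [Occ]
  | jc => intro k d h; exact h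
  | nu => intro k d h; exact h
  | app a b iha ihb => intro k d h; exact h.imp (iha k d) (ihb k d)
  | abs a ih =>
    intro k d h
    have := ih (k + 1) (d + 1) h
    simp only [lift, Occ]
    convert this using 1
    split_ifs <;> omega

theorem occ_liftN (n k : ℕ) (t : JTm) (h : Occ k t) : Occ (k + n) (liftN n t) := by
  induction n with
  | zero => exact h
  | succ n ih => rw [liftN_succ]; have := occ_lift _ _ 0 ih; exact this

theorem hasNu_lift (t : JTm) : ∀ d, HasNu t → HasNu (lift d t) := by
  induction t with
  | var n => intro d h; cases h
  | jc => intro d h; exact h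
  | nu => intro d h; exact h
  | app a b iha ihb => intro d h; exact h.imp (iha d) (ihb d)
  | abs a ih => intro d h; exact ih (d + 1) h

theorem li_lift (t : JTm) : ∀ d, LI t → LI (lift d t) := by
  induction t with
  | var n => intro d h; simp only [lift]; split <;> trivial
  | jc => intro d h; exact h
  | nu => intro d h; exact h
  | app a b iha ihb => intro d h; exact ⟨iha d h.1, ihb d h.2⟩
  | abs a ih =>
    intro d h
    refine ⟨?_, ih (d + 1) h.2⟩
    simpa using occ_lift a 0 (d + 1) h.1

theorem li_liftN (n : ℕ) (t : JTm) (h : LI t) : LI (liftN n t) := by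
  induction n with
  | zero => exact h
  | succ n ih => rw [liftN_succ]; exact li_lift _ 0 ih

theorem occ_subst_lt (t : JTm) : ∀ i k u, i < k → Occ i t → Occ i (subst t k u) := by
  induction t with
  | var n =>
    intro i k u hi h; simp only [Occ] at h; subst h
    simp only [subst]; rw [if_neg (by omega), if_neg (by omega)]; rfl
  | jc => intro i k u hi h; exact h
  | nu => intro i k u hi h; exact h
  | app a b iha ihb => intro i k u hi h; exact h.imp (iha i k u hi) (ihb i k u hi)
  | abs a ih => intro i k u hi h; exact ih (i + 1) (k + 1) _ (by omega) h

theorem occ_subst_ge (t : JTm) : ∀ i k u, k ≤ i → Occ (i + 1) t → Occ i (subst t k u) := by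
  induction t with
  | var n =>
    intro i k u hi h; simp only [Occ] at h; subst h
    simp only [subst]; rw [if_neg (by omega), if_pos (by omega)]; rfl
  | jc => intro i k u hi h; exact h
  | nu => intro i k u hi h; exact h
  | app a b iha ihb => intro i k u hi h; exact h.imp (iha i k u hi) (ihb i k u hi)
  | abs a ih => intro i k u hi h; exact ih (i + 1) (k + 1) _ (by omega) h

theorem occ_subst_eq (t : JTm) : ∀ k j u, Occ k t → Occ j u → Occ j (subst t k u) := by
  induction t with
  | var n =>
    intro k j u h hj; simp only [Occ] at h; subst h
    simpa [subst] using hj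
  | jc => intro k j u h; cases h
  | nu => intro k j u h; cases h
  | app a b iha ihb => intro k j u h hj; exact h.imp (iha k j u · hj) (ihb k j u · hj)
  | abs a ih =>
    intro k j u h hj
    exact ih (k + 1) (j + 1) _ h (by simpa using occ_lift u j 0 hj)

theorem hasNu_subst_left (t : JTm) : ∀ k u, HasNu t → HasNu (subst t k u) := by
  induction t with
  | var n => intro k u h; cases h
  | jc => intro k u h; exact h
  | nu => intro k u h; exact h
  | app a b iha ihb => intro k u h; exact h.imp (iha k u) (ihb k u)
  | abs a ih => intro k u h; exact ih (k + 1) _ h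

theorem hasNu_subst_right (t : JTm) : ∀ k u, Occ k t → HasNu u → HasNu (subst t k u) := by
  induction t with
  | var n =>
    intro k u h hj; simp only [Occ] at h; subst h
    simpa [subst] using hj
  | jc => intro k u h; cases h
  | nu => intro k u h; cases h
  | app a b iha ihb => intro k u h hj; exact h.imp (iha k u · hj) (ihb k u · hj)
  | abs a ih =>
    intro k u h hj
    exact ih (k + 1) _ h (hasNu_lift _ _ hj)

theorem li_subst (t : JTm) : ∀ k u, LI t → LI u → LI (subst t k u) := by
  induction t with
  | var n => intro k u _ hu; simp only [subst]; split_ifs <;> first | exact hu | trivial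
  | jc => intros; trivial
  | nu => intros; trivial
  | app a b iha ihb => intro k u h hu; exact ⟨iha k u h.1 hu, ihb k u h.2 hu⟩
  | abs a ih =>
    intro k u h hu
    exact ⟨occ_subst_lt _ _ _ _ (by omega) h.1, ih _ _ h.2 (li_lift _ _ hu)⟩

theorem occ_absN (n k : ℕ) (t : JTm) : Occ k (absN n t) ↔ Occ (k + n) t := by
  induction n generalizing k with
  | zero => rfl
  | succ n ih => simp only [absN, Occ, ih]; rw [show k + 1 + n = k + (n + 1) by omega]

theorem hasNu_absN (n : ℕ) (t : JTm) : HasNu (absN n t) ↔ HasNu t := by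
  induction n with
  | zero => rfl
  | succ n ih => simp only [absN, HasNu, ih]

theorem li_absN (n : ℕ) (t : JTm) (h : LI t) (ho : ∀ i < n, Occ i t) : LI (absN n t) := by
  induction n with
  | zero => exact h
  | succ n ih =>
    refine ⟨?_, ih (fun i hi => ho i (by omega))⟩
    rw [occ_absN]; exact ho _ (by omega)

theorem occ_mkApps (k : ℕ) (as : List JTm) : ∀ h,
    Occ k (mkApps h as) ↔ Occ k h ∨ ∃ a ∈ as, Occ k a := by
  induction as with
  | nil => intro h; simp [mkApps_nil]
  | cons a as ih => intro h; rw [mkApps_cons, ih]; simp [Occ, or_assoc]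

theorem hasNu_mkApps (as : List JTm) : ∀ h,
    HasNu (mkApps h as) ↔ HasNu h ∨ ∃ a ∈ as, HasNu a := by
  induction as with
  | nil => intro h; simp [mkApps_nil]
  | cons a as ih => intro h; rw [mkApps_cons, ih]; simp [HasNu, or_assoc]

theorem li_mkApps (as : List JTm) : ∀ h,
    LI (mkApps h as) ↔ LI h ∧ ∀ a ∈ as, LI a := by
  induction as with
  | nil => intro h; simp [mkApps_nil]
  | cons a as ih => intro h; rw [mkApps_cons, ih]; simp [LI, and_assoc]

theorem forall₂_left_mem {α β : Type} {R : α → β → Prop} {l : List α} {as : List β}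
    (h : List.Forall₂ R l as) : ∀ i ∈ l, ∃ a ∈ as, R i a := by
  induction h with
  | nil => simp
  | cons h1 _ ih =>
    intro i hi
    rcases List.mem_cons.1 hi with rfl | hi
    · exact ⟨_, by simp, h1⟩
    · obtain ⟨a, ha, hr⟩ := ih i hi; exact ⟨a, by simp [ha], hr⟩

theorem forall₂_right_mem {α β : Type} {R : α → β → Prop} {l : List α} {as : List β}
    (h : List.Forall₂ R l as) : ∀ a ∈ as, ∃ i ∈ l, R i a := by
  induction h with
  | nil => simp
  | cons h1 _ ih =>
    intro i hi
    rcases List.mem_cons.1 hi with rfl | hi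
    · exact ⟨_, by simp, h1⟩
    · obtain ⟨a, ha, hr⟩ := ih i hi; exact ⟨a, by simp [ha], hr⟩

theorem EJ.li {p : ℕ} {u e : JTm} (h : EJ p u e) :
    (LI u → LI e) ∧ ∀ k, Occ k u → Occ k e := by
  refine EJ.ind ?base ?jnu ?lamApp h
  case base =>
    intro u
    exact ⟨id, fun _ => id⟩
  case jnu =>
    intro u e _ ih
    exact ⟨fun h => ⟨⟨trivial, trivial⟩, ih.1 h⟩, fun k h => Or.inr (ih.2 k h)⟩
  case lamApp =>
    intro u e n as _ ih ihs
    constructor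
    · intro hu
      apply li_absN
      · rw [li_mkApps]
        refine ⟨li_liftN _ _ (ih.1 hu), ?_⟩
        intro a ha
        obtain ⟨i, _, hi⟩ := forall₂_right_mem ihs a ha
        exact hi.2.1 trivial
      · intro i hi
        obtain ⟨a, ha, hr⟩ := forall₂_left_mem ihs i (by simpa using hi)
        rw [occ_mkApps]
        exact Or.inr ⟨a, ha, hr.2.2 i rfl⟩
    · intro k hk
      rw [occ_absN, occ_mkApps]
      exact Or.inl (occ_liftN _ _ _ (ih.2 k hk))

theorem li_step {p : ℕ} (hp : 1 ≤ p) {t t' : JTm} (h : Step p t t') :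
    LI t → LI t' ∧ (∀ k, Occ k t → Occ k t') ∧ (HasNu t → HasNu t') := by
  induction h with
  | beta a b =>
    rintro ⟨⟨h0, ha⟩, hb⟩
    refine ⟨li_subst _ _ _ ha hb, ?_, ?_⟩
    · rintro k (h | h)
      · exact occ_subst_ge _ _ _ _ (Nat.zero_le k) h
      · exact occ_subst_eq _ _ _ _ h0 h
    · rintro (h | h)
      · exact hasNu_subst_left _ _ _ h
      · exact hasNu_subst_right _ _ _ h0 h
  | jrule u =>
    rintro ⟨_, hu⟩
    have hE : EJ p u (jRhs p u) := by
      refine EJ.lamApp p _ (EJ.base u) ?_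
      rw [List.forall₂_map_right_iff, List.forall₂_same]
      intro i _
      exact EJ.jnu (EJ.base _)
    refine ⟨hE.li.1 hu, ?_, ?_⟩
    · rintro k ((h | h) | h)
      · cases h
      · cases h
      · exact hE.li.2 k h
    · intro _
      unfold jRhs
      rw [hasNu_absN, hasNu_mkApps]
      refine Or.inr ⟨_, List.mem_map.2 ⟨0, by simp; omega, rfl⟩, ?_⟩
      simp [HasNu]
  | appL b hs ih =>
    rintro ⟨ha, hb⟩
    obtain ⟨h1, h2, h3⟩ := ih ha
    exact ⟨⟨h1, hb⟩, fun k h => h.imp (h2 k) id, fun h => h.imp h3 id⟩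
  | appR a hs ih =>
    rintro ⟨ha, hb⟩
    obtain ⟨h1, h2, h3⟩ := ih hb
    exact ⟨⟨ha, h1⟩, fun k h => h.imp id (h2 k), fun h => h.imp id h3⟩
  | abs hs ih =>
    rintro ⟨h0, ha⟩
    obtain ⟨h1, h2, h3⟩ := ih ha
    exact ⟨⟨h2 0 h0, h1⟩, fun k h => h2 (k + 1) h, fun h => h3 h⟩

theorem li_steps {p : ℕ} (hp : 1 ≤ p) {t t' : JTm} (h : Steps p t t') (ht : LI t) :
    LI t' ∧ (HasNu t → HasNu t') := by
  induction h with
  | refl => exact ⟨ht, id⟩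
  | tail _ hs ih =>
    have := li_step hp hs ih.1
    exact ⟨this.1, fun h => this.2.2 (ih.2 h)⟩

/-! ### The shape of head normal forms is stable under superdevelopment -/

theorem headVarApp_inert {a : JTm} (h : HeadVarApp a) : Inert a := by
  cases h with
  | var n => simp [Inert]
  | app b h =>
    refine ⟨by simp, ?_⟩
    intro hc
    simp only [JTm.app.injEq] at hc
    rw [hc.1] at h
    cases h

theorem foldl_headVarApp {p : ℕ} (as : List JTm) : ∀ h, HeadVarApp h →
    as.foldl (appStar p) h = mkApps h as := by
  induction as with
  | nil => intro h _; rfl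
  | cons a as ih =>
    intro h hh
    rw [List.foldl_cons, appStar_inert _ (headVarApp_inert hh), ih _ (HeadVarApp.app a hh)]
    rfl

theorem star_hnf {p : ℕ} (n m : ℕ) (as : List JTm) :
    star p (absN n (mkApps (var m) as)) = absN n (mkApps (var m) (as.map (star p))) := by
  rw [star_absN, star_mkApps]
  congr 1
  exact foldl_headVarApp _ _ (HeadVarApp.var m)

theorem star_iter_hnf {p : ℕ} (hp : 1 ≤ p) (n m k : ℕ) (cs es : List JTm)
    (hes : List.Forall₂ (fun i e => EJ p (var i) e) (List.range k).reverse es)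
    (hnu : ∃ e ∈ es, HasNu e) (N : ℕ) :
    ∃ cs' es', (star p)^[N] (absN n (mkApps (var m) (cs ++ es))) =
        absN n (mkApps (var m) (cs' ++ es')) ∧
      List.Forall₂ (fun i e => EJ p (var i) e) (List.range k).reverse es' ∧
      ∃ e ∈ es', HasNu e := by
  induction N with
  | zero => exact ⟨cs, es, rfl, hes, hnu⟩
  | succ N ih =>
    obtain ⟨cs', es', h1, h2, e, he, hn⟩ := ih
    refine ⟨cs'.map (star p), es'.map (star p), ?_, ?_, star p e, ?_, ?_⟩
    · rw [Function.iterate_succ_apply', h1, star_hnf, List.map_append]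
    · exact forall₂_map_mem h2 (fun i a _ ha => ha.star ⟨i, rfl⟩)
    · exact List.mem_map.2 ⟨e, he, rfl⟩
    · obtain ⟨i, _, hi⟩ := forall₂_right_mem h2 e he
      exact (li_steps hp (steps_star e) (hi.li.1 trivial)).2 hn

end JTm

open JTm in
/-- in the λJ-calculus, let `t` be solvable.  If `ν` occurs nicely in
`t`, it occurs nicely in every reduct of `t`; if `ν` occurs correctly in `t`, it occurs
correctly in every reduct of `t`. -/
theorem nice_correct_preserved (p : ℕ) (hp : 1 ≤ p) (t : JTm)
    (hsolv : Solvable p t) :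
    (Nice t → ∀ t', Steps p t t' → Nice t') ∧
    (Correct p t → ∀ t', Steps p t t' → Correct p t') := by
  refine ⟨fun h t' ht' => nice_steps ht' h, ?_⟩
  rintro ⟨hnice, n, m, k, cs, es, hk, hlen, hkn, hst, hes, hnu⟩ t' ht'
  refine ⟨nice_steps ht' hnice, ?_⟩
  obtain ⟨N, hN⟩ := star_cofinal ht'
  obtain ⟨cs', es', h1, h2, h3⟩ := star_iter_hnf hp n m k cs es hes hnu N
  refine ⟨n, m, k, cs', es', hk, ?_, hkn, ?_, h2, h3⟩
  · have := h2.length_eq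
    simpa using this.symm
  · rw [← h1]
    exact hN.trans (star_iter_mono N hst)
end
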